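/- Factoring out the exchange law: suppose that for each hypothesis e ≤ f ∈ H either e = 1 or e = a for some letter a ∈ Σ. Then H ∪ exch factorises into exch and H, i.e., H ∪ exch implies both exch and H, and cl_{H ∪ exch}(L) = cl_H(cl_exch(L)) for all L ⊆ SP. -/

import Mathlib

namespace CKAH

open Classical

/-! ### Labelled posets and pomsets -/

/-- A labelled poset over alphabet `A`: a finite carrier with a partial order and labelling. -/
structure LPoset (A : Type) : Type 1 where
  carrier : Type
  [fin : Fintype carrier]
  [ord : PartialOrder carrier]
  lab : carrier → A

attribute [instance] LPoset.fin LPoset.ord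

/-- Isomorphism of labelled posets: an order isomorphism preserving labels. -/
def LPoset.Iso {A : Type} (u v : LPoset A) : Prop :=
  ∃ e : u.carrier ≃o v.carrier, ∀ x, v.lab (e x) = u.lab x

theorem LPoset.iso_equivalence (A : Type) : Equivalence (LPoset.Iso (A := A)) where
  refl u := ⟨OrderIso.refl _, fun _ => rfl⟩
  symm := by
    rintro u v ⟨e, he⟩
    exact ⟨e.symm, fun x => by rw [← he (e.symm x), OrderIso.apply_symm_apply]⟩
  trans := by
    rintro u v w ⟨e, he⟩ ⟨f, hf⟩
    exact ⟨e.trans f, fun x => by rw [OrderIso.trans_apply, hf, he]⟩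

instance pomSetoid (A : Type) : Setoid (LPoset A) := ⟨LPoset.Iso, LPoset.iso_equivalence A⟩

/-- A pomset is an isomorphism class of labelled posets. -/
def Pomset (A : Type) : Type 1 := Quotient (pomSetoid A)

/-- Sequential composition of labelled posets: disjoint union, everything on the left
below everything on the right (lexicographic sum order). -/
def LPoset.seqL {A : Type} (u v : LPoset A) : LPoset A where
  carrier := u.carrier ⊕ₗ v.carrier
  fin := inferInstanceAs (Fintype (u.carrier ⊕ v.carrier))
  lab := fun x => Sum.elim u.lab v.lab (ofLex x)

/-- Parallel composition of labelled posets: disjoint union with no cross ordering. -/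
def LPoset.parL {A : Type} (u v : LPoset A) : LPoset A where
  carrier := u.carrier ⊕ v.carrier
  lab := Sum.elim u.lab v.lab

def Pomset.seq {A : Type} : Pomset A → Pomset A → Pomset A :=
  Quotient.map₂ LPoset.seqL (by
    rintro u₁ u₂ ⟨e, he⟩ v₁ v₂ ⟨f, hf⟩
    refine ⟨(RelIso.sumLexCongr e f :
      (u₁.carrier ⊕ₗ v₁.carrier) ≃o (u₂.carrier ⊕ₗ v₂.carrier)), ?_⟩
    rintro (x | x)
    · exact he x
    · exact hf x)

/-- Order isomorphism between disjoint-union orders, from component isomorphisms. -/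
def sumOrderIso {α β γ δ : Type} [PartialOrder α] [PartialOrder β] [PartialOrder γ]
    [PartialOrder δ] (e : α ≃o γ) (f : β ≃o δ) : (α ⊕ β) ≃o (γ ⊕ δ) where
  toEquiv := Equiv.sumCongr e.toEquiv f.toEquiv
  map_rel_iff' := by
    rintro (x | x) (y | y) <;> simp [Sum.le_def, e.le_iff_le, f.le_iff_le]

def Pomset.par {A : Type} : Pomset A → Pomset A → Pomset A :=
  Quotient.map₂ LPoset.parL (by
    rintro u₁ u₂ ⟨e, he⟩ v₁ v₂ ⟨f, hf⟩
    refine ⟨sumOrderIso e f, ?_⟩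
    rintro (x | x)
    · exact he x
    · exact hf x)

def LPoset.emptyL (A : Type) : LPoset A := { carrier := Fin 0, lab := fun x => x.elim0 }

def LPoset.singleL {A : Type} (a : A) : LPoset A := { carrier := PUnit, lab := fun _ => a }

/-- The empty pomset `1`. -/
def Pomset.empty (A : Type) : Pomset A := ⟦LPoset.emptyL A⟧

/-- The single-letter pomset. -/
def Pomset.single {A : Type} (a : A) : Pomset A := ⟦LPoset.singleL a⟧

/-- Subsumption on labelled posets: `u ⊑ v` iff there is a label-preserving
order-preserving bijection from the carrier of `v` to that of `u`. -/
def LPoset.subL {A : Type} (u v : LPoset A) : Prop :=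
  ∃ h : v.carrier ≃ u.carrier,
    (∀ x, u.lab (h x) = v.lab x) ∧ ∀ x y : v.carrier, x ≤ y → h x ≤ h y

/-- Subsumption of pomsets: `Pomset.sub U V` means `U ⊑ V`. -/
def Pomset.sub {A : Type} : Pomset A → Pomset A → Prop :=
  Quotient.lift₂ LPoset.subL (by
    rintro u₁ v₁ u₂ v₂ ⟨e, he⟩ ⟨f, hf⟩
    refine propext ⟨?_, ?_⟩
    · rintro ⟨h, hl, hm⟩
      refine ⟨(f.toEquiv.symm.trans h).trans e.toEquiv, fun x => ?_, fun x y hxy => ?_⟩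
      · show u₂.lab (e (h (f.symm x))) = v₂.lab x
        rw [he, hl, ← hf (f.symm x), OrderIso.apply_symm_apply]
      · simp only [Equiv.trans_apply]
        exact e.le_iff_le.mpr (hm _ _ (f.symm.le_iff_le.mpr hxy))
    · rintro ⟨h, hl, hm⟩
      refine ⟨(f.toEquiv.trans h).trans e.toEquiv.symm, fun x => ?_, fun x y hxy => ?_⟩
      · show u₁.lab (e.symm (h (f x))) = v₁.lab x
        rw [← he (e.symm (h (f x))), OrderIso.apply_symm_apply, hl, hf]
      · simp only [Equiv.trans_apply]
        exact e.symm.le_iff_le.mpr (hm _ _ (f.le_iff_le.mpr hxy)))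

def LPoset.isWordL {A : Type} (u : LPoset A) : Prop := ∀ x y : u.carrier, x ≤ y ∨ y ≤ x

/-- A pomset is a word when it is totally ordered. -/
def Pomset.IsWord {A : Type} : Pomset A → Prop :=
  Quotient.lift LPoset.isWordL (by
    rintro u v ⟨e, -⟩
    refine propext ⟨fun h x y => ?_, fun h x y => ?_⟩
    · rcases h (e.symm x) (e.symm y) with h' | h'
      · exact Or.inl (e.symm.le_iff_le.mp h')
      · exact Or.inr (e.symm.le_iff_le.mp h')
    · rcases h (e x) (e y) with h' | h'
      · exact Or.inl (e.le_iff_le.mp h')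
      · exact Or.inr (e.le_iff_le.mp h'))

def LPoset.mapL {A B : Type} (f : A → B) (u : LPoset A) : LPoset B :=
  { carrier := u.carrier, lab := f ∘ u.lab }

/-- Relabelling of pomsets along a function on letters. -/
def Pomset.map {A B : Type} (f : A → B) : Pomset A → Pomset B :=
  Quotient.map (LPoset.mapL f)
    (by rintro u v ⟨e, he⟩; exact ⟨e, fun x => congrArg f (he x)⟩)

def LPoset.overL {A : Type} (Γ : Set A) (u : LPoset A) : Prop := ∀ x, u.lab x ∈ Γ

/-- All labels of the pomset belong to `Γ`. -/
def Pomset.Over {A : Type} (Γ : Set A) : Pomset A → Prop :=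
  Quotient.lift (LPoset.overL Γ) (by
    rintro u v ⟨e, he⟩
    refine propext ⟨fun h x => ?_, fun h x => ?_⟩
    · have h2 := he (e.symm x)
      rw [OrderIso.apply_symm_apply] at h2
      rw [h2]; exact h _
    · rw [← he x]; exact h _)

/-- Series-parallel pomsets. -/
inductive Pomset.IsSP {A : Type} : Pomset A → Prop
  | empty : Pomset.IsSP (Pomset.empty A)
  | single (a : A) : Pomset.IsSP (Pomset.single a)
  | seq {U V : Pomset A} : Pomset.IsSP U → Pomset.IsSP V → Pomset.IsSP (Pomset.seq U V)
  | par {U V : Pomset A} : Pomset.IsSP U → Pomset.IsSP V → Pomset.IsSP (Pomset.par U V)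

def SPset (A : Type) : Set (Pomset A) := {U | U.IsSP}

/-! ### Pomset contexts -/

/-- Contexts are pomsets over `Option A`, where `none` plays the role of `*`.
`uniqueStarL` says there is exactly one `*`-labelled node. -/
def LPoset.uniqueStarL {A : Type} (c : LPoset (Option A)) : Prop := ∃! x, c.lab x = none

theorem LPoset.uniqueStarL_congr {A : Type} {u v : LPoset (Option A)}
    (e : u.carrier ≃o v.carrier) (he : ∀ x, v.lab (e x) = u.lab x) :
    u.uniqueStarL ↔ v.uniqueStarL := by
  constructor
  · rintro ⟨x, hx, hux⟩
    refine ⟨e x, show v.lab (e x) = none by rw [he]; exact hx, fun y hy => ?_⟩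
    have h2 := he (e.symm y)
    rw [OrderIso.apply_symm_apply] at h2
    have h3 : e.symm y = x := hux _ (h2.symm.trans hy)
    rw [← h3, OrderIso.apply_symm_apply]
  · rintro ⟨x, hx, hvx⟩
    refine ⟨e.symm x, ?_, fun y hy => ?_⟩
    · show u.lab (e.symm x) = none
      have h2 := he (e.symm x)
      rw [OrderIso.apply_symm_apply] at h2
      rw [← h2]; exact hx
    · have h3 : e y = x := hvx _ (show v.lab (e y) = none by rw [he]; exact hy)
      rw [← h3, OrderIso.symm_apply_apply]

/-- A pomset context: exactly one node labelled `*`. -/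
def Pomset.IsCtx {A : Type} : Pomset (Option A) → Prop :=
  Quotient.lift LPoset.uniqueStarL
    (fun _ _ h => propext (LPoset.uniqueStarL_congr h.choose h.choose_spec))

/-- Series-parallel pomset contexts. -/
def Pomset.IsSPCtx {A : Type} (C : Pomset (Option A)) : Prop := C.IsCtx ∧ C.IsSP

/-- Sequential (totally ordered) pomset contexts. -/
def Pomset.IsSeqCtx {A : Type} (C : Pomset (Option A)) : Prop := C.IsCtx ∧ C.IsWord

/-- The trivial context `*`. -/
def starCtx (A : Type) : Pomset (Option A) := Pomset.single (none : Option A)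

theorem option_get_eq_get {α : Type} {o₁ o₂ : Option α} (h : o₁ = o₂) (h₁ : o₁.isSome)
    (h₂ : o₂.isSome) : o₁.get h₁ = o₂.get h₂ := by subst h; rfl

/-- The order of `C[U]`: the orders of `C` (restricted away from `*`) and of `U`, with a
point of `C` below (resp. above) all of `U` when it is below (resp. above) the unique
`*`-node of `C`.  (For well-definedness of the order, the cross-relations are guarded by
the requirement that the star node is unique, which holds for every genuine context.) -/
def LPoset.insLe {A : Type} (c : LPoset (Option A)) (u : LPoset A) :
    ({x : c.carrier // c.lab x ≠ none} ⊕ u.carrier) →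
    ({x : c.carrier // c.lab x ≠ none} ⊕ u.carrier) → Prop
  | Sum.inl x, Sum.inl y => x.val ≤ y.val
  | Sum.inr x, Sum.inr y => x ≤ y
  | Sum.inl x, Sum.inr _ => c.uniqueStarL ∧ ∃ s, c.lab s = none ∧ x.val ≤ s
  | Sum.inr _, Sum.inl y => c.uniqueStarL ∧ ∃ s, c.lab s = none ∧ s ≤ y.val

/-- Insertion of a labelled poset `u` into the gap of a context `c`: the `*`-labelled
node is removed and `u` is put in its place, inheriting the order relations of `*`. -/
noncomputable def LPoset.insL {A : Type} (c : LPoset (Option A)) (u : LPoset A) :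
    LPoset A where
  carrier := {x : c.carrier // c.lab x ≠ none} ⊕ u.carrier
  fin := by classical exact inferInstance
  ord :=
    { le := LPoset.insLe c u
      lt := fun p q => LPoset.insLe c u p q ∧ ¬ LPoset.insLe c u q p
      lt_iff_le_not_ge := fun _ _ => Iff.rfl
      le_refl := by rintro (x | x) <;> exact le_refl _
      le_trans := by
        rintro (x | x) (y | y) (z | z) h1 h2
        · exact le_trans h1 h2
        · obtain ⟨hu, s, hs, hys⟩ := h2
          exact ⟨hu, s, hs, le_trans h1 hys⟩
        · obtain ⟨hu, s, hs, hxs⟩ := h1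
          obtain ⟨-, t, ht, htz⟩ := h2
          obtain ⟨w, hw, huniq⟩ := hu
          have hst : s = t := (huniq s hs).trans (huniq t ht).symm
          exact le_trans (hst ▸ hxs) htz
        · exact h1
        · obtain ⟨hu, s, hs, hsy⟩ := h1
          exact ⟨hu, s, hs, le_trans hsy h2⟩
        · obtain ⟨hu, s, hs, hsy⟩ := h1
          obtain ⟨-, t, ht, hyt⟩ := h2
          obtain ⟨w, hw, huniq⟩ := hu
          have hst : s = t := (huniq s hs).trans (huniq t ht).symm
          have hy : y.val = s := le_antisymm (hst.symm ▸ hyt) hsy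
          exact absurd (hy.symm ▸ hs) y.prop
        · exact h2
        · exact le_trans h1 h2
      le_antisymm := by
        rintro (x | x) (y | y) h1 h2
        · exact congrArg Sum.inl (Subtype.ext (le_antisymm h1 h2))
        · obtain ⟨hu, s, hs, hxs⟩ := h1
          obtain ⟨-, t, ht, htx⟩ := h2
          obtain ⟨w, hw, huniq⟩ := hu
          have hst : s = t := (huniq s hs).trans (huniq t ht).symm
          have hx : x.val = s := le_antisymm hxs (hst.symm ▸ htx)
          exact absurd (hx.symm ▸ hs) x.prop
        · obtain ⟨hu, s, hs, hsy⟩ := h1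
          obtain ⟨-, t, ht, hyt⟩ := h2
          obtain ⟨w, hw, huniq⟩ := hu
          have hst : s = t := (huniq s hs).trans (huniq t ht).symm
          have hy : y.val = s := le_antisymm (hst.symm ▸ hyt) hsy
          exact absurd (hy.symm ▸ hs) y.prop
        · exact congrArg Sum.inr (le_antisymm h1 h2) }
  lab := Sum.elim (fun x => (c.lab x.val).get (Option.isSome_iff_ne_none.mpr x.prop)) u.lab

/-- `Pomset.ins C U` is `C[U]`: plugging the pomset `U` into the gap of the context `C`. -/
noncomputable def Pomset.ins {A : Type} : Pomset (Option A) → Pomset A → Pomset A :=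
  Quotient.map₂ LPoset.insL (by
    rintro c₁ c₂ ⟨e, he⟩ u₁ u₂ ⟨f, hf⟩
    have hstar : c₁.uniqueStarL ↔ c₂.uniqueStarL := LPoset.uniqueStarL_congr e he
    refine ⟨{ toEquiv := Equiv.sumCongr
                (e.toEquiv.subtypeEquiv fun x => by
                  rw [show c₂.lab (e.toEquiv x) = c₁.lab x from he x]) f.toEquiv
              map_rel_iff' := ?_ }, ?_⟩
    · rintro (x | x) (y | y)
      · exact e.le_iff_le
      · show (c₂.uniqueStarL ∧ ∃ s, c₂.lab s = none ∧ (e x.val : c₂.carrier) ≤ s) ↔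
             (c₁.uniqueStarL ∧ ∃ s, c₁.lab s = none ∧ x.val ≤ s)
        constructor
        · rintro ⟨hu, s, hs, hxs⟩
          refine ⟨hstar.mpr hu, e.symm s, ?_, ?_⟩
          · have h2 := he (e.symm s)
            rw [OrderIso.apply_symm_apply] at h2
            rw [← h2]; exact hs
          · exact e.le_iff_le.mp (by rw [OrderIso.apply_symm_apply]; exact hxs)
        · rintro ⟨hu, s, hs, hxs⟩
          exact ⟨hstar.mp hu, e s, by rw [he]; exact hs, e.le_iff_le.mpr hxs⟩
      · show (c₂.uniqueStarL ∧ ∃ s, c₂.lab s = none ∧ s ≤ (e y.val : c₂.carrier)) ↔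
             (c₁.uniqueStarL ∧ ∃ s, c₁.lab s = none ∧ s ≤ y.val)
        constructor
        · rintro ⟨hu, s, hs, hsy⟩
          refine ⟨hstar.mpr hu, e.symm s, ?_, ?_⟩
          · have h2 := he (e.symm s)
            rw [OrderIso.apply_symm_apply] at h2
            rw [← h2]; exact hs
          · exact e.le_iff_le.mp (by rw [OrderIso.apply_symm_apply]; exact hsy)
        · rintro ⟨hu, s, hs, hsy⟩
          exact ⟨hstar.mp hu, e s, by rw [he]; exact hs, e.le_iff_le.mpr hsy⟩
      · exact f.le_iff_le
    · rintro (x | x)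
      · exact option_get_eq_get (he x.val) _ _
      · exact hf x)

/-! ### Pomset languages -/

abbrev Lang (A : Type) := Set (Pomset A)

def Lang.seq {A : Type} (L K : Lang A) : Lang A :=
  {W | ∃ U ∈ L, ∃ V ∈ K, W = Pomset.seq U V}

def Lang.par {A : Type} (L K : Lang A) : Lang A :=
  {W | ∃ U ∈ L, ∃ V ∈ K, W = Pomset.par U V}

def Lang.pow {A : Type} (L : Lang A) : ℕ → Lang A
  | 0 => {Pomset.empty A}
  | n + 1 => Lang.seq (Lang.pow L n) L

def Lang.star {A : Type} (L : Lang A) : Lang A := ⋃ n, L.pow n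

/-- Application of a context to a language: `C[L] = {C[U] : U ∈ L}`. -/
def Ctx.img {A : Type} (C : Pomset (Option A)) (L : Lang A) : Lang A :=
  {W | ∃ U ∈ L, W = C.ins U}

/-! ### CKA terms and semantics -/

inductive Term (A : Type) : Type
  | zero : Term A
  | one : Term A
  | var : A → Term A
  | add : Term A → Term A → Term A
  | seq : Term A → Term A → Term A
  | par : Term A → Term A → Term A
  | star : Term A → Term A

/-- Pomset language semantics of CKA terms. -/
def Term.lang {A : Type} : Term A → Lang A
  | .zero => ∅
  | .one => {Pomset.empty A}
  | .var a => {Pomset.single a}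
  | .add e f => e.lang ∪ f.lang
  | .seq e f => Lang.seq e.lang f.lang
  | .par e f => Lang.par e.lang f.lang
  | .star e => Lang.star e.lang

/-- Sets of hypotheses: a hypothesis `e ≤ f` is the pair `(e, f)`. -/
abbrev HypSet (A : Type) := Set (Term A × Term A)

/-- The congruence `≡^H` on CKA terms generated by the CKA axioms and the hypotheses `H`
(the constructor `hyp` encodes `e ≦^H f`, i.e. `e + f ≡^H f`, for `e ≤ f ∈ H`). -/
inductive CongH {A : Type} (H : HypSet A) : Term A → Term A → Prop
  | refl (e) : CongH H e e
  | symm {e f} : CongH H e f → CongH H f e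
  | trans {e f g} : CongH H e f → CongH H f g → CongH H e g
  | addCong {e e' f f'} : CongH H e e' → CongH H f f' → CongH H (.add e f) (.add e' f')
  | seqCong {e e' f f'} : CongH H e e' → CongH H f f' → CongH H (.seq e f) (.seq e' f')
  | parCong {e e' f f'} : CongH H e e' → CongH H f f' → CongH H (.par e f) (.par e' f')
  | starCong {e e'} : CongH H e e' → CongH H (.star e) (.star e')
  | addZero (e) : CongH H (.add e .zero) e
  | addIdem (e) : CongH H (.add e e) e
  | addComm (e f) : CongH H (.add e f) (.add f e)
  | addAssoc (e f g) : CongH H (.add e (.add f g)) (.add (.add e f) g)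
  | seqAssoc (e f g) : CongH H (.seq e (.seq f g)) (.seq (.seq e f) g)
  | seqDistL (e f g) : CongH H (.seq e (.add f g)) (.add (.seq e f) (.seq e g))
  | seqDistR (e f g) : CongH H (.seq (.add e f) g) (.add (.seq e g) (.seq f g))
  | seqOneR (e) : CongH H (.seq e .one) e
  | seqOneL (e) : CongH H (.seq .one e) e
  | seqZeroR (e) : CongH H (.seq e .zero) .zero
  | seqZeroL (e) : CongH H (.seq .zero e) .zero
  | parComm (e f) : CongH H (.par e f) (.par f e)
  | parOne (e) : CongH H (.par e .one) e
  | parZero (e) : CongH H (.par e .zero) .zero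
  | parAssoc (e f g) : CongH H (.par e (.par f g)) (.par (.par e f) g)
  | parDist (e f g) : CongH H (.par e (.add f g)) (.add (.par e f) (.par e g))
  | starUnfoldL (e) : CongH H (.add .one (.seq e (.star e))) (.star e)
  | starUnfoldR (e) : CongH H (.add .one (.seq (.star e) e)) (.star e)
  | lfpL {e f g} : CongH H (.add (.add e (.seq f g)) g) g →
      CongH H (.add (.seq (.star f) e) g) g
  | lfpR {e f g} : CongH H (.add (.add e (.seq f g)) f) f →
      CongH H (.add (.seq e (.star g)) f) f
  | hyp {e f} : (e, f) ∈ H → CongH H (.add e f) f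

/-- `e ≦^H f`, the natural order `e + f ≡^H f`. -/
def LeH {A : Type} (H : HypSet A) (e f : Term A) : Prop := CongH H (.add e f) f

/-- The `H`-closure of a pomset language, as an inductive predicate: the smallest language
containing `L` such that for all `e ≤ f ∈ H` and series-parallel contexts `C`,
if `C[⟦f⟧] ⊆ cl` then `C[⟦e⟧] ⊆ cl`. -/
inductive closure {A : Type} (H : HypSet A) (L : Lang A) : Pomset A → Prop
  | base {U} : U ∈ L → closure H L U
  | step {e f : Term A} (hef : (e, f) ∈ H) {C : Pomset (Option A)} (hC : C.IsSPCtx)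
      (hf : ∀ V ∈ f.lang, closure H L (C.ins V)) {U} (hU : U ∈ e.lang) :
      closure H L (C.ins U)

/-- `cl H L` is the `H`-closure of `L`. -/
def cl {A : Type} (H : HypSet A) (L : Lang A) : Lang A := {U | closure H L U}

/-- The sequential closure: like `cl` but only sequential contexts are used. -/
inductive seqClosure {A : Type} (H : HypSet A) (L : Lang A) : Pomset A → Prop
  | base {U} : U ∈ L → seqClosure H L U
  | step {e f : Term A} (hef : (e, f) ∈ H) {C : Pomset (Option A)} (hC : C.IsSeqCtx)
      (hf : ∀ V ∈ f.lang, seqClosure H L (C.ins V)) {U} (hU : U ∈ e.lang) :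
      seqClosure H L (C.ins U)

def seqCl {A : Type} (H : HypSet A) (L : Lang A) : Lang A := {U | seqClosure H L U}

/-! ### Implication, completeness, reductions -/

/-- `H` implies `H'`: every hypothesis of `H'` is derivable from `H`. -/
def Implies {A : Type} (H H' : HypSet A) : Prop := ∀ p ∈ H', LeH H p.1 p.2

/-- `H` is complete: semantic equivalence implies axiomatic equivalence. -/
def Complete {A : Type} (H : HypSet A) : Prop :=
  ∀ e f : Term A, cl H e.lang = cl H f.lang → CongH H e f

/-- A reduction from `H` to `H'` (presupposing that `H` implies `H'`). -/
structure IsReduction {A : Type} (H H' : HypSet A) (r : Term A → Term A) : Prop where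
  implies : Implies H H'
  equiv : ∀ e, CongH H e (r e)
  reflect : ∀ e f : Term A, cl H e.lang = cl H f.lang → cl H' (r e).lang = cl H' (r f).lang

def Reduces {A : Type} (H H' : HypSet A) : Prop := ∃ r, IsReduction H H' r

/-- A strong reduction from `H` to `H'`. -/
structure IsStrongReduction {A : Type} (H H' : HypSet A) (r : Term A → Term A)
    extends IsReduction H H' r : Prop where
  strong : ∀ e : Term A, cl H e.lang = cl H' (r e).lang

def StronglyReduces {A : Type} (H H' : HypSet A) : Prop := ∃ r, IsStrongReduction H H' r

/-- `H` factorises into `H₀` and `H₁`. -/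
def Factorises {A : Type} (H H₀ H₁ : HypSet A) : Prop :=
  Implies H H₀ ∧ Implies H H₁ ∧ ∀ L : Lang A, L ⊆ SPset A → cl H L = cl H₁ (cl H₀ L)

/-! ### The exchange hypotheses and sp-subsumption -/

/-- The exchange hypotheses `(e∥f)·(g∥h) ≤ (e·g)∥(f·h)`. -/
def exch (A : Type) : HypSet A :=
  {p | ∃ e f g h : Term A,
    p = (Term.seq (.par e f) (.par g h), Term.par (.seq e g) (.seq f h))}

/-- `⊑^sp`: the smallest precongruence on series-parallel pomsets satisfying the
exchange inequality. -/
inductive spSub {A : Type} : Pomset A → Pomset A → Prop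
  | refl {U : Pomset A} : U.IsSP → spSub U U
  | trans {U V W} : spSub U V → spSub V W → spSub U W
  | seqCong {U V U' V'} : spSub U V → spSub U' V' → spSub (Pomset.seq U U') (Pomset.seq V V')
  | parCong {U V U' V'} : spSub U V → spSub U' V' → spSub (Pomset.par U U') (Pomset.par V V')
  | exch {U V W X : Pomset A} : U.IsSP → V.IsSP → W.IsSP → X.IsSP →
      spSub (Pomset.seq (Pomset.par U V) (Pomset.par W X))
            (Pomset.par (Pomset.seq U W) (Pomset.seq V X))

/-! ### KA terms, grounded hypotheses, sequential reductions -/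

/-- A term is a KA term when it contains no `∥`. -/
def Term.noPar {A : Type} : Term A → Prop
  | .zero => True
  | .one => True
  | .var _ => True
  | .add e f => e.noPar ∧ f.noPar
  | .seq e f => e.noPar ∧ f.noPar
  | .par _ _ => False
  | .star e => e.noPar

/-- A non-empty word. -/
def IsNonemptyWord {A : Type} (W : Pomset A) : Prop := W.IsWord ∧ W ≠ Pomset.empty A

/-- A set of hypotheses is grounded when in each hypothesis `e ≤ f`, `e` is a KA term and
`⟦f⟧ = {W}` for a non-empty word `W`. -/
def Grounded {A : Type} (H : HypSet A) : Prop :=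
  ∀ p ∈ H, p.1.noPar ∧ ∃ W : Pomset A, IsNonemptyWord W ∧ p.2.lang = {W}

/-- `≡_KA^H`: the congruence on terms generated by the axioms of `≡` not involving `∥`
together with the hypotheses of `H`. -/
inductive KACong {A : Type} (H : HypSet A) : Term A → Term A → Prop
  | refl (e) : KACong H e e
  | symm {e f} : KACong H e f → KACong H f e
  | trans {e f g} : KACong H e f → KACong H f g → KACong H e g
  | addCong {e e' f f'} : KACong H e e' → KACong H f f' → KACong H (.add e f) (.add e' f')
  | seqCong {e e' f f'} : KACong H e e' → KACong H f f' → KACong H (.seq e f) (.seq e' f')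
  | starCong {e e'} : KACong H e e' → KACong H (.star e) (.star e')
  | addZero (e) : KACong H (.add e .zero) e
  | addIdem (e) : KACong H (.add e e) e
  | addComm (e f) : KACong H (.add e f) (.add f e)
  | addAssoc (e f g) : KACong H (.add e (.add f g)) (.add (.add e f) g)
  | seqAssoc (e f g) : KACong H (.seq e (.seq f g)) (.seq (.seq e f) g)
  | seqDistL (e f g) : KACong H (.seq e (.add f g)) (.add (.seq e f) (.seq e g))
  | seqDistR (e f g) : KACong H (.seq (.add e f) g) (.add (.seq e g) (.seq f g))
  | seqOneR (e) : KACong H (.seq e .one) e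
  | seqOneL (e) : KACong H (.seq .one e) e
  | seqZeroR (e) : KACong H (.seq e .zero) .zero
  | seqZeroL (e) : KACong H (.seq .zero e) .zero
  | starUnfoldL (e) : KACong H (.add .one (.seq e (.star e))) (.star e)
  | starUnfoldR (e) : KACong H (.add .one (.seq (.star e) e)) (.star e)
  | lfpL {e f g} : KACong H (.add (.add e (.seq f g)) g) g →
      KACong H (.add (.seq (.star f) e) g) g
  | lfpR {e f g} : KACong H (.add (.add e (.seq f g)) f) f →
      KACong H (.add (.seq e (.star g)) f) f
  | hyp {e f} : (e, f) ∈ H → KACong H (.add e f) f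

/-- A sequential reduction from `H` to `H'`. -/
structure IsSeqReduction {A : Type} (H H' : HypSet A) (r : Term A → Term A) : Prop where
  implies : Implies H H'
  equiv : ∀ e : Term A, e.noPar → KACong H e (r e)
  closure_eq : ∀ e : Term A, e.noPar → seqCl H e.lang = seqCl H' (r e).lang

/-- Extension of a map on (KA) terms to all CKA terms, homomorphically on `∥`. -/
def parExt {A : Type} (r : Term A → Term A) : Term A → Term A
  | .par e f => .par (parExt r e) (parExt r f)
  | e => r e

/-! ### Inductive characterisation of sp contexts -/

/-- The generators of series-parallel contexts (Lemma: `PC^sp` is the smallest such set). -/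
inductive GenCtx {A : Type} : Pomset (Option A) → Prop
  | star : GenCtx (Pomset.single (none : Option A))
  | seqL {U : Pomset A} {C} : U.IsSP → GenCtx C → GenCtx (Pomset.seq (Pomset.map some U) C)
  | seqR {C} {V : Pomset A} : GenCtx C → V.IsSP → GenCtx (Pomset.seq C (Pomset.map some V))
  | par {U : Pomset A} {C} : U.IsSP → GenCtx C → GenCtx (Pomset.par (Pomset.map some U) C)

/-! ### Reification -/

/-- Homomorphic extension of a letter map to terms. -/
def rTerm {A : Type} (r : A → Term A) : Term A → Term A
  | .zero => .zero
  | .one => .one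
  | .var a => r a
  | .add e f => .add (rTerm r e) (rTerm r f)
  | .seq e f => .seq (rTerm r e) (rTerm r f)
  | .par e f => .par (rTerm r e) (rTerm r f)
  | .star e => .star (rTerm r e)

/-- All letters of a term lie in `Γ`. -/
def TermOver {A : Type} (Γ : Set A) : Term A → Prop
  | .zero => True
  | .one => True
  | .var a => a ∈ Γ
  | .add e f => TermOver Γ e ∧ TermOver Γ f
  | .seq e f => TermOver Γ e ∧ TermOver Γ f
  | .par e f => TermOver Γ e ∧ TermOver Γ f
  | .star e => TermOver Γ e

/-- Extension of a letter map `r` to (series-parallel) pomsets, as a relation: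
`rMap r U V` means `V ∈ r(U)`. -/
inductive rMap {A : Type} (r : A → Term A) : Pomset A → Pomset A → Prop
  | one : rMap r (Pomset.empty A) (Pomset.empty A)
  | var (a : A) {V} : V ∈ (r a).lang → rMap r (Pomset.single a) V
  | seq {U U' V V'} : rMap r U V → rMap r U' V' →
      rMap r (Pomset.seq U U') (Pomset.seq V V')
  | par {U U' V V'} : rMap r U V → rMap r U' V' →
      rMap r (Pomset.par U U') (Pomset.par V V')

/-- Image of a language under (the pomset extension of) `r`. -/
def rImg {A : Type} (r : A → Term A) (L : Lang A) : Lang A := {V | ∃ U ∈ L, rMap r U V}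

/-- Series-parallel pomsets over the subalphabet `Γ`. -/
def SPover {A : Type} (Γ : Set A) : Lang A := {U | U.IsSP ∧ U.Over Γ}

/-- `r : Σ → Term Γ` is a reification from `H` to `H'`. -/
structure IsReification {A : Type} (Γ : Set A) (H H' : HypSet A) (r : A → Term A) : Prop where
  toGamma : ∀ a : A, TermOver Γ (r a)
  equiv : ∀ a : A, CongH H (r a) (.var a)
  expansive : ∀ a ∈ Γ, LeH (∅ : HypSet A) (.var a) (r a)
  preserves : ∀ L : Lang A, L ⊆ SPover Γ → cl H' L ⊆ SPover Γ
  hyps : ∀ p ∈ H, LeH H' (rTerm r p.1) (rTerm r p.2)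

end CKAH

namespace CKAH
open Classical

abbrev pm {A : Type} (u : LPoset A) : Pomset A := Quotient.mk (pomSetoid A) u

theorem pm_eq {A : Type} {u v : LPoset A} (f : u.carrier → v.carrier)
    (hs : Function.Surjective f) (hle : ∀ x y, f x ≤ f y ↔ x ≤ y)
    (hl : ∀ x, v.lab (f x) = u.lab x) : pm u = pm v := by
  have hi : Function.Injective f := fun x y h =>
    le_antisymm ((hle x y).1 h.le) ((hle y x).1 h.ge)
  exact Quotient.sound ⟨{ toEquiv := Equiv.ofBijective f ⟨hi, hs⟩, map_rel_iff' := fun {x y} => hle x y }, hl⟩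

/-! ### Series-parallel relations -/

inductive SPon {X : Type} (r : X → X → Prop) : Set X → Prop
  | empty : SPon r ∅
  | single (x : X) : r x x → SPon r {x}
  | seq {S T : Set X} : SPon r S → SPon r T → (∀ x ∈ S, ∀ y ∈ T, r x y ∧ ¬ r y x) →
      SPon r (S ∪ T)
  | par {S T : Set X} : SPon r S → SPon r T → (∀ x ∈ S, ∀ y ∈ T, ¬ r x y ∧ ¬ r y x) →
      SPon r (S ∪ T)

theorem SPon.mono {X : Type} {r : X → X → Prop} {S : Set X} (h : SPon r S) :
    ∀ T ⊆ S, SPon r T := by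
  induction h with
  | empty => intro T hT; rw [Set.subset_empty_iff.1 hT]; exact .empty
  | single x hx =>
    intro T hT
    rcases Set.subset_singleton_iff_eq.1 hT with h | h
    · rw [h]; exact .empty
    · rw [h]; exact .single x hx
  | @seq S1 S2 h1 h2 hr i1 i2 =>
    intro T hT
    have e : T = (T ∩ S1) ∪ (T ∩ S2) := by
      rw [← Set.inter_union_distrib_left]; exact (Set.inter_eq_left.2 hT).symm
    rw [e]
    exact .seq (i1 _ Set.inter_subset_right) (i2 _ Set.inter_subset_right)
      fun x hx y hy => hr x hx.2 y hy.2
  | @par S1 S2 h1 h2 hr i1 i2 =>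
    intro T hT
    have e : T = (T ∩ S1) ∪ (T ∩ S2) := by
      rw [← Set.inter_union_distrib_left]; exact (Set.inter_eq_left.2 hT).symm
    rw [e]
    exact .par (i1 _ Set.inter_subset_right) (i2 _ Set.inter_subset_right)
      fun x hx y hy => hr x hx.2 y hy.2

theorem SPon.refl {X : Type} {r : X → X → Prop} {S : Set X} (h : SPon r S) :
    ∀ x ∈ S, r x x := by
  induction h with
  | empty => intro x hx; exact hx.elim
  | single x hx => rintro y rfl; exact hx
  | seq h1 h2 hr i1 i2 => rintro x (hx | hx); exacts [i1 x hx, i2 x hx]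
  | par h1 h2 hr i1 i2 => rintro x (hx | hx); exacts [i1 x hx, i2 x hx]

theorem SPon.antisymm {X : Type} {r : X → X → Prop} {S : Set X} (h : SPon r S) :
    ∀ x ∈ S, ∀ y ∈ S, r x y → r y x → x = y := by
  induction h with
  | empty => intro x hx; exact hx.elim
  | single x hx => rintro y rfl z rfl _ _; rfl
  | seq h1 h2 hr i1 i2 =>
    rintro x (hx | hx) y (hy | hy) h h'
    · exact i1 x hx y hy h h'
    · exact absurd h' (hr x hx y hy).2
    · exact absurd h (hr y hy x hx).2
    · exact i2 x hx y hy h h'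
  | par h1 h2 hr i1 i2 =>
    rintro x (hx | hx) y (hy | hy) h h'
    · exact i1 x hx y hy h h'
    · exact absurd h' (hr x hx y hy).2
    · exact absurd h (hr y hy x hx).2
    · exact i2 x hx y hy h h'

theorem SPon.trans {X : Type} {r : X → X → Prop} {S : Set X} (h : SPon r S) :
    ∀ x ∈ S, ∀ y ∈ S, ∀ z ∈ S, r x y → r y z → r x z := by
  induction h with
  | empty => intro x hx; exact hx.elim
  | single x hx => rintro y rfl z rfl w rfl _ _; exact hx
  | seq h1 h2 hr i1 i2 =>
    rintro x (hx | hx) y (hy | hy) z (hz | hz) h h'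
    · exact i1 x hx y hy z hz h h'
    · exact (hr x hx z hz).1
    · exact absurd h' (hr z hz y hy).2
    · exact (hr x hx z hz).1
    · exact absurd h (hr y hy x hx).2
    · exact absurd h (hr y hy x hx).2
    · exact absurd h' (hr z hz y hy).2
    · exact i2 x hx y hy z hz h h'
  | par h1 h2 hr i1 i2 =>
    rintro x (hx | hx) y (hy | hy) z (hz | hz) h h'
    · exact i1 x hx y hy z hz h h'
    · exact absurd h' (hr y hy z hz).1
    · exact absurd h' (hr z hz y hy).2
    · exact absurd h (hr x hx y hy).1
    · exact absurd h (hr y hy x hx).2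
    · exact absurd h (hr y hy x hx).2
    · exact absurd h' (hr z hz y hy).2
    · exact i2 x hx y hy z hz h h'

theorem SPon.image {X Y : Type} {r : X → X → Prop} {r' : Y → Y → Prop} (f : X → Y) {S : Set X}
    (h : SPon r S) : (∀ x ∈ S, ∀ y ∈ S, r' (f x) (f y) ↔ r x y) → SPon r' (f '' S) := by
  induction h with
  | empty => intro _; rw [Set.image_empty]; exact .empty
  | single x hx =>
    intro h
    rw [Set.image_singleton]; exact .single _ ((h x rfl x rfl).2 hx)
  | seq h1 h2 hr i1 i2 =>
    intro h
    rw [Set.image_union]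
    refine .seq (i1 fun x hx y hy => h x (.inl hx) y (.inl hy))
      (i2 fun x hx y hy => h x (.inr hx) y (.inr hy)) ?_
    rintro _ ⟨x, hx, rfl⟩ _ ⟨y, hy, rfl⟩
    rw [h x (.inl hx) y (.inr hy), h y (.inr hy) x (.inl hx)]
    exact hr x hx y hy
  | par h1 h2 hr i1 i2 =>
    intro h
    rw [Set.image_union]
    refine .par (i1 fun x hx y hy => h x (.inl hx) y (.inl hy))
      (i2 fun x hx y hy => h x (.inr hx) y (.inr hy)) ?_
    rintro _ ⟨x, hx, rfl⟩ _ ⟨y, hy, rfl⟩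
    rw [h x (.inl hx) y (.inr hy), h y (.inr hy) x (.inl hx)]
    exact hr x hx y hy

theorem SPon.congr {X : Type} {r r' : X → X → Prop} {S : Set X}
    (h : SPon r S) (hr : ∀ x ∈ S, ∀ y ∈ S, r' x y ↔ r x y) : SPon r' S := by
  have := h.image (r' := r') id hr
  rwa [Set.image_id] at this

/-- Gluing two relations: `b` decides whether the part in `S` is put below the rest. -/
def glue {X : Type} (S : Set X) (b : Prop) (r q : X → X → Prop) (x y : X) : Prop :=
  (x ∈ S ∧ y ∈ S ∧ r x y) ∨ (x ∉ S ∧ y ∉ S ∧ q x y) ∨ (x ∈ S ∧ y ∉ S ∧ b)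

theorem SPon.glueSP {X : Type} {S T : Set X} (b : Prop) {r q : X → X → Prop}
    (hr : SPon r S) (hq : SPon q T) (hd : ∀ x ∈ T, x ∉ S) : SPon (glue S b r q) (S ∪ T) := by
  have h1 : SPon (glue S b r q) S := hr.congr fun x hx y hy => by simp [glue, hx, hy]
  have h2 : SPon (glue S b r q) T := hq.congr fun x hx y hy => by
    simp [glue, hd x hx, hd y hy]
  by_cases hb : b
  · exact .seq h1 h2 fun x hx y hy => by simp [glue, hx, hd y hy, hb]
  · exact .par h1 h2 fun x hx y hy => by simp [glue, hx, hd y hy, hb]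

/-- Inserting a point `s` into a strengthened series-parallel order. -/
theorem insert_point {X : Type} (d : X → X → Prop) (s : X) (drefl : ∀ x, d x x)
    (dtrans : ∀ x y z, d x y → d y z → d x z)
    {o : X → X → Prop} {S : Set X} (h : SPon o S) :
    s ∉ S → (∀ x ∈ S, ∀ y ∈ S, d x y → o x y) →
    (∀ x ∈ S, d x s → ¬ d s x) →
    ∃ d' : X → X → Prop, SPon d' (insert s S) ∧ (∀ x ∈ S, ∀ y ∈ S, d' x y ↔ o x y) ∧
      (∀ x ∈ insert s S, ∀ y ∈ insert s S, d x y → d' x y) := by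
  -- `s` on top, on the bottom, or isolated
  have hs : SPon d {s} := .single s (drefl s)
  have top : ∀ {S : Set X}, SPon o S → s ∉ S → (∀ x ∈ S, ∀ y ∈ S, d x y → o x y) →
      (∀ x ∈ S, ¬ d s x) → ∃ d' : X → X → Prop, SPon d' (insert s S) ∧
      (∀ x ∈ S, ∀ y ∈ S, d' x y ↔ o x y) ∧
      (∀ x ∈ insert s S, ∀ y ∈ insert s S, d x y → d' x y) := by
    intro S h hsS hdo hn
    refine ⟨glue S True o d, ?_, ?_, ?_⟩
    · rw [Set.insert_eq, Set.union_comm]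
      exact h.glueSP True hs (by rintro x rfl; exact hsS)
    · intro x hx y hy; simp [glue, hx, hy]
    · rintro x (rfl | hx) y (rfl | hy) hxy
      · simp [glue, hsS, hxy]
      · exact absurd hxy (hn y hy)
      · simp [glue, hsS, hx]
      · simp [glue, hx, hy, hdo x hx y hy hxy]
  have bot : ∀ {S : Set X}, SPon o S → s ∉ S → (∀ x ∈ S, ∀ y ∈ S, d x y → o x y) →
      (∀ x ∈ S, ¬ d x s) → ∃ d' : X → X → Prop, SPon d' (insert s S) ∧
      (∀ x ∈ S, ∀ y ∈ S, d' x y ↔ o x y) ∧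
      (∀ x ∈ insert s S, ∀ y ∈ insert s S, d x y → d' x y) := by
    intro S h hsS hdo hn
    have hne : ∀ x ∈ S, x ≠ s := fun x hx e => hsS (e ▸ hx)
    refine ⟨glue {s} True d o, ?_, ?_, ?_⟩
    · rw [Set.insert_eq]
      exact hs.glueSP True h (by rintro x hx rfl; exact hsS hx)
    · intro x hx y hy; simp [glue, hne x hx, hne y hy]
    · rintro x (rfl | hx) y (rfl | hy) hxy
      · simp [glue, hxy]
      · simp [glue, hne y hy]
      · exact absurd hxy (hn x hx)
      · simp [glue, hne x hx, hne y hy, hdo x hx y hy hxy]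
  induction h with
  | empty => intro a b _; exact top .empty a b (by simp)
  | single x hx =>
    intro a b c
    by_cases hc : d x s
    · exact top (.single x hx) a b (by rintro y rfl; exact c y rfl hc)
    · exact bot (.single x hx) a b (by rintro y rfl; exact hc)
  | @seq S T h1 h2 hr i1 i2 =>
    intro a b c
    have a1 : s ∉ S := fun h => a (.inl h)
    have a2 : s ∉ T := fun h => a (.inr h)
    have disj : ∀ x ∈ T, x ∉ S := fun x hx hx' => (hr x hx' x hx).2 (h1.refl x hx')
    have ndis : ∀ x ∈ S, x ∉ T := fun x hx hx' => disj x hx' hx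
    have nts : ∀ x ∈ S, ∀ y ∈ T, ¬ d y x := fun x hx y hy hd =>
      (hr x hx y hy).2 (b y (.inr hy) x (.inl hx) hd)
    by_cases c2 : ∃ y ∈ T, d y s
    · obtain ⟨y0, hy0, hd0⟩ := c2
      have nsx : ∀ x ∈ S, ¬ d s x := fun x hx hd => nts x hx y0 hy0 (dtrans _ _ _ hd0 hd)
      obtain ⟨d', p1, p2, p3⟩ := i2 a2 (fun x hx y hy => b x (.inr hx) y (.inr hy))
        (fun x hx => c x (.inr hx))
      refine ⟨glue S True o d', ?_, ?_, ?_⟩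
      · rw [← Set.union_insert]
        exact h1.glueSP True p1 (by rintro x (rfl | hx); exacts [a1, disj x hx])
      · rintro x (hx | hx) y (hy | hy)
        · simp [glue, hx, hy]
        · simp [glue, hx, disj y hy, (hr x hx y hy).1]
        · simp [glue, hy, disj x hx, (hr y hy x hx).2]
        · simp [glue, disj x hx, disj y hy, p2 x hx y hy]
      · rintro x (rfl | hx | hx) y (rfl | hy | hy) hxy
        · exact .inr (.inl ⟨a1, a1, p3 _ (.inl rfl) _ (.inl rfl) hxy⟩)
        · exact absurd hxy (nsx y hy)
        · simp [glue, a1, disj y hy, p3 x (.inl rfl) y (.inr hy) hxy]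
        · simp [glue, a1, hx]
        · simp [glue, hx, hy, b x (.inl hx) y (.inl hy) hxy]
        · simp [glue, hx, disj y hy]
        · simp [glue, a1, disj x hx, p3 x (.inr hx) y (.inl rfl) hxy]
        · exact absurd hxy (nts y hy x hx)
        · simp [glue, disj x hx, disj y hy, p3 x (.inr hx) y (.inr hy) hxy]
    · push Not at c2
      -- `S` with `s`, then `T`
      have key : ∃ d' : X → X → Prop, SPon d' (insert s S) ∧
          (∀ x ∈ S, ∀ y ∈ S, d' x y ↔ o x y) ∧
          (∀ x ∈ insert s S, ∀ y ∈ insert s S, d x y → d' x y) :=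
        i1 a1 (fun x hx y hy => b x (.inl hx) y (.inl hy)) (fun x hx => c x (.inl hx))
      obtain ⟨d', p1, p2, p3⟩ := key
      have disj' : ∀ x ∈ T, x ∉ insert s S := by
        rintro x hx (rfl | hx'); exacts [a2 hx, disj x hx hx']
      refine ⟨glue (insert s S) True d' o, ?_, ?_, ?_⟩
      · rw [← Set.insert_union]
        exact p1.glueSP True h2 disj'
      · rintro x (hx | hx) y (hy | hy)
        · simp [glue, hx, hy, p2 x hx y hy]
        · have := disj' y hy
          simp [glue, hx, this, (hr x hx y hy).1]
        · have := disj' x hx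
          simp [glue, hy, this, (hr y hy x hx).2]
        · simp [glue, disj' x hx, disj' y hy]
      · have e : insert s (S ∪ T) = insert s S ∪ T := Set.insert_union.symm
        rw [e]
        rintro x (hx | hx) y (hy | hy) hxy
        · exact .inl ⟨hx, hy, p3 x hx y hy hxy⟩
        · exact .inr (.inr ⟨hx, disj' y hy, trivial⟩)
        · rcases hy with rfl | hy
          · exact absurd hxy (c2 x hx)
          · exact absurd hxy (nts y hy x hx)
        · exact .inr (.inl ⟨disj' x hx, disj' y hy, b x (.inr hx) y (.inr hy) hxy⟩)
  | @par S T h1 h2 hr i1 i2 =>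
    intro a b c
    have a1 : s ∉ S := fun h => a (.inl h)
    have a2 : s ∉ T := fun h => a (.inr h)
    have disj : ∀ x ∈ T, x ∉ S := fun x hx hx' => (hr x hx' x hx).2 (h1.refl x hx')
    have nst : ∀ x ∈ S, ∀ y ∈ T, ¬ d x y := fun x hx y hy hd =>
      (hr x hx y hy).1 (b x (.inl hx) y (.inr hy) hd)
    have nts : ∀ x ∈ S, ∀ y ∈ T, ¬ d y x := fun x hx y hy hd =>
      (hr x hx y hy).2 (b y (.inr hy) x (.inl hx) hd)
    by_cases ct : ∃ x ∈ S ∪ T, d s x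
    swap
    · push Not at ct
      exact top (.par h1 h2 hr) a b ct
    by_cases cb : ∃ x ∈ S ∪ T, d x s
    swap
    · push Not at cb
      exact bot (.par h1 h2 hr) a b cb
    by_cases cS : ∀ x ∈ S, ¬ d s x ∧ ¬ d x s
    · obtain ⟨d', p1, p2, p3⟩ := i2 a2 (fun x hx y hy => b x (.inr hx) y (.inr hy))
        (fun x hx => c x (.inr hx))
      refine ⟨glue S False o d', ?_, ?_, ?_⟩
      · rw [← Set.union_insert]
        exact h1.glueSP False p1 (by rintro x (rfl | hx); exacts [a1, disj x hx])
      · rintro x (hx | hx) y (hy | hy)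
        · simp [glue, hx, hy]
        · simp [glue, hx, disj y hy, (hr x hx y hy).1]
        · simp [glue, hy, disj x hx, (hr y hy x hx).2]
        · simp [glue, disj x hx, disj y hy, p2 x hx y hy]
      · rintro x (rfl | hx | hx) y (rfl | hy | hy) hxy
        · exact .inr (.inl ⟨a1, a1, p3 _ (.inl rfl) _ (.inl rfl) hxy⟩)
        · exact absurd hxy (cS y hy).1
        · simp [glue, a1, disj y hy, p3 x (.inl rfl) y (.inr hy) hxy]
        · exact absurd hxy (cS x hx).2
        · simp [glue, hx, hy, b x (.inl hx) y (.inl hy) hxy]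
        · exact absurd hxy (nst x hx y hy)
        · simp [glue, a1, disj x hx, p3 x (.inr hx) y (.inl rfl) hxy]
        · exact absurd hxy (nts y hy x hx)
        · simp [glue, disj x hx, disj y hy, p3 x (.inr hx) y (.inr hy) hxy]
    · have cT : ∀ y ∈ T, ¬ d y s ∧ ¬ d s y := by
        push Not at cS
        obtain ⟨x, hx, hxs⟩ := cS
        obtain ⟨p, hp, hsp⟩ := ct
        obtain ⟨q, hq, hqs⟩ := cb
        -- one of `p, q` and hence both lie in `S`
        have hpq := dtrans _ _ _ hqs hsp
        have hpS : p ∈ S := by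
          rcases hp with hp | hp
          · exact hp
          · exfalso
            rcases hq with hq | hq
            · exact nst q hq p hp hpq
            · by_cases hh : d s x
              · exact nts x hx q hq (dtrans _ _ _ hqs hh)
              · exact nst x hx p hp (dtrans _ _ _ (hxs hh) hsp)
        have hqS : q ∈ S := by
          rcases hq with hq | hq
          · exact hq
          · exact absurd hpq (nts p hpS q hq)
        exact fun y hy => ⟨fun hd => nts p hpS y hy (dtrans _ _ _ hd hsp),
          fun hd => nst q hqS y hy (dtrans _ _ _ hqs hd)⟩
      obtain ⟨d', p1, p2, p3⟩ := i1 a1 (fun x hx y hy => b x (.inl hx) y (.inl hy))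
        (fun x hx => c x (.inl hx))
      have disj' : ∀ x ∈ T, x ∉ insert s S := by
        rintro x hx (rfl | hx'); exacts [a2 hx, disj x hx hx']
      refine ⟨glue (insert s S) False d' o, ?_, ?_, ?_⟩
      · rw [← Set.insert_union]
        exact p1.glueSP False h2 disj'
      · rintro x (hx | hx) y (hy | hy)
        · simp [glue, hx, hy, p2 x hx y hy]
        · have := disj' y hy
          simp [glue, hx, this, (hr x hx y hy).1]
        · have := disj' x hx
          simp [glue, hy, this, (hr y hy x hx).2]
        · simp [glue, disj' x hx, disj' y hy]
      · have e : insert s (S ∪ T) = insert s S ∪ T := Set.insert_union.symm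
        rw [e]
        rintro x (hx | hx) y (hy | hy) hxy
        · exact .inl ⟨hx, hy, p3 x hx y hy hxy⟩
        · rcases hx with rfl | hx
          · exact absurd hxy (cT y hy).2
          · exact absurd hxy (nst x hx y hy)
        · rcases hy with rfl | hy
          · exact absurd hxy (cT x hx).1
          · exact absurd hxy (nts y hy x hx)
        · exact .inr (.inl ⟨disj' x hx, disj' y hy, b x (.inr hx) y (.inr hy) hxy⟩)

end CKAH

namespace CKAH
open Classical

theorem exists_SPon {A : Type} {Q : Pomset A} (h : Q.IsSP) :
    ∃ u : LPoset A, pm u = Q ∧ SPon (fun x y : u.carrier => x ≤ y) Set.univ := by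
  induction h with
  | empty =>
    refine ⟨LPoset.emptyL A, rfl, ?_⟩
    have : (Set.univ : Set (LPoset.emptyL A).carrier) = ∅ := by
      ext x; exact x.elim0
    rw [this]; exact .empty
  | single a =>
    refine ⟨LPoset.singleL a, rfl, ?_⟩
    have : (Set.univ : Set (LPoset.singleL a).carrier) = {PUnit.unit} := by
      ext x; exact ⟨fun _ => rfl, fun _ => trivial⟩
    rw [this]; exact .single _ le_rfl
  | seq hU hV i1 i2 =>
    obtain ⟨u, rfl, hu⟩ := i1
    obtain ⟨v, rfl, hv⟩ := i2
    refine ⟨LPoset.seqL u v, rfl, ?_⟩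
    have e : (Set.univ : Set (LPoset.seqL u v).carrier) =
        (fun x => toLex (Sum.inl x)) '' Set.univ ∪ (fun x => toLex (Sum.inr x)) '' Set.univ := by
      ext x
      rcases x with x | x
      · exact ⟨fun _ => .inl ⟨x, trivial, rfl⟩, fun _ => trivial⟩
      · exact ⟨fun _ => .inr ⟨x, trivial, rfl⟩, fun _ => trivial⟩
    rw [e]
    refine .seq (hu.image _ ?_) (hv.image _ ?_) ?_
    · intro x _ y _; exact Sum.Lex.inl_le_inl_iff
    · intro x _ y _; exact Sum.Lex.inr_le_inr_iff
    · rintro _ ⟨x, _, rfl⟩ _ ⟨y, _, rfl⟩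
      exact ⟨Sum.Lex.inl_le_inr _ _, Sum.Lex.not_inr_le_inl⟩
  | par hU hV i1 i2 =>
    obtain ⟨u, rfl, hu⟩ := i1
    obtain ⟨v, rfl, hv⟩ := i2
    refine ⟨LPoset.parL u v, rfl, ?_⟩
    have e : (Set.univ : Set (LPoset.parL u v).carrier) =
        (fun x => Sum.inl x) '' Set.univ ∪ (fun x => Sum.inr x) '' Set.univ := by
      ext x
      rcases x with x | x
      · exact ⟨fun _ => .inl ⟨x, trivial, rfl⟩, fun _ => trivial⟩
      · exact ⟨fun _ => .inr ⟨x, trivial, rfl⟩, fun _ => trivial⟩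
    rw [e]
    refine .par (hu.image _ ?_) (hv.image _ ?_) ?_
    · intro x _ y _; exact Sum.inl_le_inl_iff
    · intro x _ y _; exact Sum.inr_le_inr_iff
    · rintro _ ⟨x, _, rfl⟩ _ ⟨y, _, rfl⟩
      exact ⟨Sum.not_inl_le_inr, Sum.not_inr_le_inl⟩

theorem SPon_of_isSP {A : Type} (u : LPoset A) (h : (pm u).IsSP) :
    SPon (fun x y : u.carrier => x ≤ y) Set.univ := by
  obtain ⟨v, hv, hs⟩ := exists_SPon h
  obtain ⟨e, -⟩ := Quotient.exact hv
  have := hs.image (r' := fun x y : u.carrier => x ≤ y) e (fun x _ y _ => e.le_iff_le)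
  rwa [Set.image_univ, e.surjective.range_eq] at this

/-- Sub-pomset on the set `S`. -/
noncomputable def LPoset.on {A X : Type} [Finite X] (o : PartialOrder X) (lab : X → A)
    (S : Set X) : LPoset A where
  carrier := S
  fin := Fintype.ofFinite _
  ord := @Subtype.partialOrder X o S
  lab := fun x => lab x.1

noncomputable def PS {A X : Type} [Finite X] (o : PartialOrder X) (lab : X → A)
    (S : Set X) : Pomset A := pm (LPoset.on o lab S)

theorem PS_univ {A : Type} (u : LPoset A) : PS u.ord u.lab Set.univ = pm u :=
  pm_eq (fun x => x.1) (fun x => ⟨⟨x, trivial⟩, rfl⟩) (fun _ _ => Iff.rfl) fun _ => rfl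

theorem PS_empty {A X : Type} [Finite X] (o : PartialOrder X) (lab : X → A) :
    PS o lab ∅ = Pomset.empty A :=
  pm_eq (fun x => x.2.elim) (fun x => x.elim0) (fun x => x.2.elim) fun x => x.2.elim

theorem PS_single {A X : Type} [Finite X] (o : PartialOrder X) (lab : X → A) (x : X) :
    PS o lab {x} = Pomset.single (lab x) := by
  refine pm_eq (fun _ => PUnit.unit) (fun y => ⟨⟨x, rfl⟩, rfl⟩) ?_ ?_
  · rintro ⟨y, rfl⟩ ⟨z, rfl⟩
    exact ⟨fun _ => o.le_refl _, fun _ => le_rfl⟩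
  · rintro ⟨y, rfl⟩; rfl

theorem PS_seq {A X : Type} [Finite X] (o : PartialOrder X) (lab : X → A) {S T : Set X}
    (h : ∀ x ∈ S, ∀ y ∈ T, o.le x y ∧ ¬ o.le y x) :
    PS o lab (S ∪ T) = Pomset.seq (PS o lab S) (PS o lab T) := by
  symm
  refine pm_eq (u := LPoset.seqL (LPoset.on o lab S) (LPoset.on o lab T))
    (v := LPoset.on o lab (S ∪ T))
    (fun p => Sum.elim (fun x : S => (⟨x.1, .inl x.2⟩ : ↥(S ∪ T)))
      (fun x : T => ⟨x.1, .inr x.2⟩) (ofLex p)) ?_ ?_ ?_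
  · rintro ⟨x, hx | hx⟩
    · exact ⟨toLex (Sum.inl ⟨x, hx⟩), rfl⟩
    · exact ⟨toLex (Sum.inr ⟨x, hx⟩), rfl⟩
  · rintro (x | x) (y | y)
    · exact (Sum.Lex.inl_le_inl_iff (a := x) (b := y)).symm
    · exact ⟨fun _ => Sum.Lex.inl_le_inr x y, fun _ => (h x.1 x.2 y.1 y.2).1⟩
    · exact ⟨fun h' => absurd h' (h y.1 y.2 x.1 x.2).2,
        fun h' => absurd h' (Sum.Lex.not_inr_le_inl (a := y) (b := x))⟩
    · exact (Sum.Lex.inr_le_inr_iff (a := x) (b := y)).symm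
  · rintro (x | x) <;> rfl

theorem PS_par {A X : Type} [Finite X] (o : PartialOrder X) (lab : X → A) {S T : Set X}
    (h : ∀ x ∈ S, ∀ y ∈ T, ¬ o.le x y ∧ ¬ o.le y x) :
    PS o lab (S ∪ T) = Pomset.par (PS o lab S) (PS o lab T) := by
  symm
  refine pm_eq (u := LPoset.parL (LPoset.on o lab S) (LPoset.on o lab T))
    (v := LPoset.on o lab (S ∪ T))
    (fun p => Sum.elim (fun x : S => (⟨x.1, .inl x.2⟩ : ↥(S ∪ T)))
      (fun x : T => ⟨x.1, .inr x.2⟩) p) ?_ ?_ ?_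
  · rintro ⟨x, hx | hx⟩
    · exact ⟨Sum.inl ⟨x, hx⟩, rfl⟩
    · exact ⟨Sum.inr ⟨x, hx⟩, rfl⟩
  · rintro (x | x) (y | y)
    · exact (Sum.inl_le_inl_iff (a := x) (b := y)).symm
    · exact ⟨fun h' => absurd h' (h x.1 x.2 y.1 y.2).1,
        fun h' => absurd h' Sum.not_inl_le_inr⟩
    · exact ⟨fun h' => absurd h' (h y.1 y.2 x.1 x.2).2,
        fun h' => absurd h' Sum.not_inr_le_inl⟩
    · exact (Sum.inr_le_inr_iff (a := x) (b := y)).symm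
  · rintro (x | x) <;> rfl

theorem seq_assoc {A : Type} (U V W : Pomset A) :
    Pomset.seq (Pomset.seq U V) W = Pomset.seq U (Pomset.seq V W) := by
  induction U, V using Quotient.inductionOn₂ with | _ u v =>
  induction W using Quotient.inductionOn with | _ w =>
  refine pm_eq (u := LPoset.seqL (LPoset.seqL u v) w) (v := LPoset.seqL u (LPoset.seqL v w))
    (OrderIso.sumLexAssoc u.carrier v.carrier w.carrier)
    (OrderIso.surjective _) (fun x y => OrderIso.le_iff_le _) ?_
  rintro ((x | x) | x) <;> rfl

theorem PS_sp {A X : Type} [Finite X] (o : PartialOrder X) (lab : X → A) {S : Set X}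
    (h : SPon o.le S) : (PS o lab S).IsSP := by
  induction h with
  | empty => rw [PS_empty]; exact .empty
  | single x hx => rw [PS_single]; exact .single _
  | seq h1 h2 hr i1 i2 => rw [PS_seq o lab hr]; exact .seq i1 i2
  | par h1 h2 hr i1 i2 => rw [PS_par o lab hr]; exact .par i1 i2

theorem isSP_of_SPon {A : Type} (u : LPoset A)
    (h : SPon (fun x y : u.carrier => x ≤ y) Set.univ) : (pm u).IsSP := by
  rw [← PS_univ]; exact PS_sp _ _ h

theorem down_split {A X : Type} [Finite X] (o : PartialOrder X) (lab : X → A) {V : Set X}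
    (h : SPon o.le V) : ∀ S T : Set X, S ∪ T = V → (∀ x ∈ S, ∀ y ∈ T, ¬ o.le y x) →
    spSub (Pomset.seq (PS o lab S) (PS o lab T)) (PS o lab V) := by
  induction h with
  | empty =>
    intro S T hST hn
    have hS : S = ∅ := by
      rw [← Set.subset_empty_iff, ← hST]; exact Set.subset_union_left
    rw [← PS_seq, hST]
    · exact .refl (PS_sp _ _ .empty)
    · intro x hx; rw [hS] at hx; exact hx.elim
  | single x hx =>
    intro S T hST hn
    rw [← PS_seq, hST]
    · exact .refl (PS_sp _ _ (.single x hx))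
    · intro y hy z hz
      have e1 : y ∈ ({x} : Set X) := hST ▸ Or.inl hy
      have e2 : z ∈ ({x} : Set X) := hST ▸ Or.inr hz
      rw [Set.mem_singleton_iff] at e1 e2
      subst e1 e2
      exact absurd hx (hn _ hy _ hz)
  | @seq V1 V2 h1 h2 hr i1 i2 =>
    intro S T hST hn
    have disj : ∀ x ∈ S, x ∉ T := fun x hx hx' => hn x hx x hx' (o.le_refl x)
    have d12 : ∀ x ∈ V1, x ∉ V2 := fun x hx hx' => (hr x hx x hx').2 (o.le_refl x)
    have mem : ∀ x, (x ∈ S ∨ x ∈ T) ↔ (x ∈ V1 ∨ x ∈ V2) := fun x => by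
      rw [← Set.mem_union, ← Set.mem_union, hST]
    rw [PS_seq o lab hr]
    by_cases c : V1 ⊆ S
    · have eS : S = V1 ∪ (S ∩ V2) := by
        ext x
        simp only [Set.mem_union, Set.mem_inter_iff]
        have := mem x; have := @c x
        tauto
      have hT : (S ∩ V2) ∪ T = V2 := by
        ext x
        simp only [Set.mem_union, Set.mem_inter_iff]
        have := mem x; have := @c x; have := disj x; have := d12 x
        tauto
      have := i2 (S ∩ V2) T hT (fun x hx y hy => hn x hx.1 y hy)
      rw [eS, PS_seq o lab (fun x hx y hy => hr x hx y hy.2), seq_assoc]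
      exact .seqCong (.refl (PS_sp _ _ h1)) this
    · rw [Set.not_subset] at c
      obtain ⟨x0, hx0, hx0S⟩ := c
      have hx0T : x0 ∈ T := ((mem x0).2 (.inl hx0)).resolve_left hx0S
      have c2 : ∀ y ∈ V2, y ∉ S := fun y hy hyS => hn y hyS x0 hx0T (hr x0 hx0 y hy).1
      have eT : T = (T ∩ V1) ∪ V2 := by
        ext x
        simp only [Set.mem_union, Set.mem_inter_iff]
        have := mem x; have := c2 x
        tauto
      have hS : S ∪ (T ∩ V1) = V1 := by
        ext x
        simp only [Set.mem_union, Set.mem_inter_iff]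
        have := mem x; have := c2 x; have := disj x; have := d12 x
        tauto
      have := i1 S (T ∩ V1) hS (fun x hx y hy => hn x hx y hy.1)
      rw [eT, PS_seq o lab (fun x hx y hy => hr x hx.2 y hy), ← seq_assoc]
      exact .seqCong this (.refl (PS_sp _ _ h2))
  | @par V1 V2 h1 h2 hr i1 i2 =>
    intro S T hST hn
    have mem : ∀ x, (x ∈ S ∨ x ∈ T) ↔ (x ∈ V1 ∨ x ∈ V2) := fun x => by
      rw [← Set.mem_union, ← Set.mem_union, hST]
    rw [PS_par o lab hr]
    have eS : S = (S ∩ V1) ∪ (S ∩ V2) := by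
      ext x
      simp only [Set.mem_union, Set.mem_inter_iff]
      have := mem x
      tauto
    have eT : T = (T ∩ V1) ∪ (T ∩ V2) := by
      ext x
      simp only [Set.mem_union, Set.mem_inter_iff]
      have := mem x
      tauto
    have j1 := i1 (S ∩ V1) (T ∩ V1) (by
      rw [← Set.union_inter_distrib_right, hST]; simp) (fun x hx y hy => hn x hx.1 y hy.1)
    have j2 := i2 (S ∩ V2) (T ∩ V2) (by
      rw [← Set.union_inter_distrib_right, hST]; simp) (fun x hx y hy => hn x hx.1 y hy.1)
    refine spSub.trans ?_ (.parCong j1 j2)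
    conv_lhs => rw [eS, eT]
    rw [PS_par o lab (fun x hx y hy => hr x hx.2 y hy.2),
      PS_par o lab (fun x hx y hy => hr x hx.2 y hy.2)]
    exact .exch (PS_sp _ _ (h1.mono _ Set.inter_subset_right))
      (PS_sp _ _ (h2.mono _ Set.inter_subset_right))
      (PS_sp _ _ (h1.mono _ Set.inter_subset_right))
      (PS_sp _ _ (h2.mono _ Set.inter_subset_right))

theorem gischer_on {A X : Type} [Finite X] (o' o : PartialOrder X) (lab : X → A) {S : Set X}
    (h : SPon o'.le S) : SPon o.le S → (∀ x ∈ S, ∀ y ∈ S, o.le x y → o'.le x y) →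
    spSub (PS o' lab S) (PS o lab S) := by
  induction h with
  | empty => intro _ _; rw [PS_empty, PS_empty]; exact .refl .empty
  | single x hx => intro _ _; rw [PS_single, PS_single]; exact .refl (.single _)
  | @seq S T h1 h2 hr i1 i2 =>
    intro ho hm
    rw [PS_seq o' lab hr]
    refine spSub.trans (.seqCong (i1 (ho.mono _ Set.subset_union_left) ?_)
      (i2 (ho.mono _ Set.subset_union_right) ?_)) (down_split o lab ho S T rfl ?_)
    · exact fun x hx y hy => hm x (.inl hx) y (.inl hy)
    · exact fun x hx y hy => hm x (.inr hx) y (.inr hy)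
    · exact fun x hx y hy hyx => (hr x hx y hy).2 (hm y (.inr hy) x (.inl hx) hyx)
  | @par S T h1 h2 hr i1 i2 =>
    intro ho hm
    rw [PS_par o' lab hr, PS_par o lab (fun x hx y hy =>
      ⟨fun h => (hr x hx y hy).1 (hm x (.inl hx) y (.inr hy) h),
       fun h => (hr x hx y hy).2 (hm y (.inr hy) x (.inl hx) h)⟩)]
    exact .parCong (i1 (ho.mono _ Set.subset_union_left)
        fun x hx y hy => hm x (.inl hx) y (.inl hy))
      (i2 (ho.mono _ Set.subset_union_right)
        fun x hx y hy => hm x (.inr hx) y (.inr hy))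

/-- On series-parallel pomsets, subsumption is generated by the exchange law. -/
theorem gischer {A : Type} {U V : Pomset A} (hU : U.IsSP) (hV : V.IsSP) (h : U.sub V) :
    spSub U V := by
  induction U, V using Quotient.inductionOn₂ with | _ u v =>
  obtain ⟨f, hl, hm⟩ := h
  have e : pm u = PS (PartialOrder.lift f f.injective) v.lab Set.univ := by
    symm
    exact pm_eq (u := LPoset.on (PartialOrder.lift f f.injective) v.lab Set.univ) (v := u)
      (fun x => f x.1) (fun x => ⟨⟨f.symm x, trivial⟩, f.apply_symm_apply x⟩)
      (fun x y => Iff.rfl) (fun x => hl x.1)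
  have hu := SPon_of_isSP u hU
  have hv := SPon_of_isSP v hV
  change spSub (pm u) (pm v)
  rw [e, ← PS_univ v]
  refine gischer_on _ _ _ ?_ hv (fun x _ y _ hxy => hm x y hxy)
  have := hu.image (r' := (PartialOrder.lift f f.injective).le) f.symm (fun x _ y _ => by
    change f (f.symm x) ≤ f (f.symm y) ↔ _
    simp)
  rwa [Set.image_univ, f.symm.surjective.range_eq] at this

theorem spSub_sp {A : Type} {U V : Pomset A} (h : spSub U V) : U.IsSP ∧ V.IsSP := by
  induction h with
  | refl h => exact ⟨h, h⟩
  | trans _ _ h1 h2 => exact ⟨h1.1, h2.2⟩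
  | seqCong _ _ h1 h2 => exact ⟨.seq h1.1 h2.1, .seq h1.2 h2.2⟩
  | parCong _ _ h1 h2 => exact ⟨.par h1.1 h2.1, .par h1.2 h2.2⟩
  | exch a b c d => exact ⟨.seq (.par a b) (.par c d), .par (.seq a c) (.seq b d)⟩

end CKAH

namespace CKAH
open Classical

/-! ### Contexts -/

theorem insLe_lr {A : Type} {c : LPoset (Option A)} (hc : c.uniqueStarL) {s : c.carrier}
    (hs : c.lab s = none) {w : LPoset A} (x : {x : c.carrier // c.lab x ≠ none})
    (y : w.carrier) : LPoset.insLe c w (.inl x) (.inr y) ↔ x.1 ≤ s :=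
  ⟨fun ⟨_, _, ht, h⟩ => (hc.unique hs ht) ▸ h, fun h => ⟨hc, s, hs, h⟩⟩

theorem insLe_rl {A : Type} {c : LPoset (Option A)} (hc : c.uniqueStarL) {s : c.carrier}
    (hs : c.lab s = none) {w : LPoset A} (x : {x : c.carrier // c.lab x ≠ none})
    (y : w.carrier) : LPoset.insLe c w (.inr y) (.inl x) ↔ s ≤ x.1 :=
  ⟨fun ⟨_, _, ht, h⟩ => (hc.unique hs ht) ▸ h, fun h => ⟨hc, s, hs, h⟩⟩

theorem ins_star {A : Type} (W : Pomset A) : (Pomset.single (none : Option A)).ins W = W := by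
  induction W using Quotient.inductionOn with | _ w =>
  symm
  refine pm_eq (v := LPoset.insL (LPoset.singleL none) w) (fun x => Sum.inr x) ?_
    (fun x y => Iff.rfl) (fun x => rfl)
  rintro (⟨x, hx⟩ | x)
  · exact absurd rfl hx
  · exact ⟨x, rfl⟩

theorem ctx_seqL {A : Type} (u : LPoset A) {c : LPoset (Option A)} (hc : c.uniqueStarL) :
    (LPoset.seqL (LPoset.mapL some u) c).uniqueStarL := by
  obtain ⟨s, hs, hu⟩ := hc
  refine ⟨toLex (Sum.inr s), hs, ?_⟩
  rintro (x | x) hx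
  · cases hx
  · exact congrArg (fun x => toLex (Sum.inr x)) (hu x hx)

theorem ctx_seqR {A : Type} (u : LPoset A) {c : LPoset (Option A)} (hc : c.uniqueStarL) :
    (LPoset.seqL c (LPoset.mapL some u)).uniqueStarL := by
  obtain ⟨s, hs, hu⟩ := hc
  refine ⟨toLex (Sum.inl s), hs, ?_⟩
  rintro (x | x) hx
  · exact congrArg (fun x => toLex (Sum.inl x)) (hu x hx)
  · cases hx

theorem ctx_parL {A : Type} (u : LPoset A) {c : LPoset (Option A)} (hc : c.uniqueStarL) :
    (LPoset.parL (LPoset.mapL some u) c).uniqueStarL := by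
  obtain ⟨s, hs, hu⟩ := hc
  refine ⟨Sum.inr s, hs, ?_⟩
  rintro (x | x) hx
  · cases hx
  · exact congrArg Sum.inr (hu x hx)

theorem par_comm {A : Type} (U V : Pomset A) : Pomset.par U V = Pomset.par V U := by
  induction U, V using Quotient.inductionOn₂ with | _ u v =>
  refine pm_eq (u := LPoset.parL u v) (v := LPoset.parL v u) Sum.swap
    (Equiv.sumComm _ _).surjective (fun x y => Sum.swap_le_swap_iff) ?_
  rintro (x | x) <;> rfl

theorem ins_seqL {A : Type} (u : LPoset A) {c : LPoset (Option A)} (hc : c.uniqueStarL)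
    (w : LPoset A) : pm (LPoset.insL (LPoset.seqL (LPoset.mapL some u) c) w) =
      pm (LPoset.seqL u (LPoset.insL c w)) := by
  symm
  have hc' := ctx_seqL u hc
  obtain ⟨s, hs, hu⟩ := id hc
  let c' := LPoset.seqL (LPoset.mapL some u) c
  let s' : c'.carrier := toLex (Sum.inr s)
  have hs' : c'.lab s' = none := hs
  let g : (LPoset.seqL u (LPoset.insL c w)).carrier → (LPoset.insL c' w).carrier := fun p =>
    match ofLex p with
    | .inl a => .inl ⟨toLex (Sum.inl a), fun h => Option.some_ne_none _ h⟩
    | .inr (.inl x) => .inl ⟨toLex (Sum.inr x.1), x.2⟩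
    | .inr (.inr b) => .inr b
  refine pm_eq g ?_ ?_ ?_
  · rintro (⟨x | x, hx⟩ | x)
    · exact ⟨toLex (Sum.inl x), rfl⟩
    · exact ⟨toLex (Sum.inr (Sum.inl ⟨x, hx⟩)), rfl⟩
    · exact ⟨toLex (Sum.inr (Sum.inr x)), rfl⟩
  · rintro (x | x | x) (y | y | y)
    · exact (Sum.Lex.inl_le_inl_iff (a := x) (b := y)).trans
        (Sum.Lex.inl_le_inl_iff (a := x) (b := y)).symm
    · exact ⟨fun _ => Sum.Lex.inl_le_inr _ _, fun _ => Sum.Lex.inl_le_inr _ _⟩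
    · exact (insLe_lr hc' hs' _ _).trans
        ⟨fun _ => Sum.Lex.inl_le_inr _ _, fun _ => Sum.Lex.inl_le_inr _ _⟩
    · exact ⟨fun h => absurd h Sum.Lex.not_inr_le_inl, fun h => absurd h Sum.Lex.not_inr_le_inl⟩
    · exact (Sum.Lex.inr_le_inr_iff (a := x.1) (b := y.1)).trans
        (Sum.Lex.inr_le_inr_iff (β := (LPoset.insL c w).carrier)
          (a := Sum.inl x) (b := Sum.inl y)).symm
    · exact ((insLe_lr hc' hs' _ _).trans (Sum.Lex.inr_le_inr_iff (a := x.1) (b := s))).trans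
        ((insLe_lr hc hs x y).symm.trans (Sum.Lex.inr_le_inr_iff (β := (LPoset.insL c w).carrier)
          (a := Sum.inl x) (b := Sum.inr y)).symm)
    · refine (insLe_rl hc' hs' _ _).trans ?_
      exact ⟨fun h => absurd h Sum.Lex.not_inr_le_inl, fun h => absurd h Sum.Lex.not_inr_le_inl⟩
    · exact ((insLe_rl hc' hs' ⟨toLex (Sum.inr y.1), y.2⟩ x).trans
        (Sum.Lex.inr_le_inr_iff (a := s) (b := y.1))).trans
        ((insLe_rl hc hs y x).symm.trans (Sum.Lex.inr_le_inr_iff (β := (LPoset.insL c w).carrier)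
          (a := Sum.inr x) (b := Sum.inl y)).symm)
    · exact (Sum.Lex.inr_le_inr_iff (β := (LPoset.insL c w).carrier)
          (a := Sum.inr x) (b := Sum.inr y)).symm
  · rintro (x | x | x) <;> rfl

theorem ins_seqR {A : Type} (u : LPoset A) {c : LPoset (Option A)} (hc : c.uniqueStarL)
    (w : LPoset A) : pm (LPoset.insL (LPoset.seqL c (LPoset.mapL some u)) w) =
      pm (LPoset.seqL (LPoset.insL c w) u) := by
  symm
  have hc' := ctx_seqR u hc
  obtain ⟨s, hs, hu⟩ := id hc
  let c' := LPoset.seqL c (LPoset.mapL some u)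
  let s' : c'.carrier := toLex (Sum.inl s)
  have hs' : c'.lab s' = none := hs
  let g : (LPoset.seqL (LPoset.insL c w) u).carrier → (LPoset.insL c' w).carrier := fun p =>
    match ofLex p with
    | .inr a => .inl ⟨toLex (Sum.inr a), fun h => Option.some_ne_none _ h⟩
    | .inl (.inl x) => .inl ⟨toLex (Sum.inl x.1), x.2⟩
    | .inl (.inr b) => .inr b
  refine pm_eq g ?_ ?_ ?_
  · rintro (⟨x | x, hx⟩ | x)
    · exact ⟨toLex (Sum.inl (Sum.inl ⟨x, hx⟩)), rfl⟩
    · exact ⟨toLex (Sum.inr x), rfl⟩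
    · exact ⟨toLex (Sum.inl (Sum.inr x)), rfl⟩
  · rintro ((x | x) | x) ((y | y) | y)
    · exact (Sum.Lex.inl_le_inl_iff (a := x.1) (b := y.1)).trans
        (Sum.Lex.inl_le_inl_iff (α := (LPoset.insL c w).carrier)
          (a := Sum.inl x) (b := Sum.inl y)).symm
    · exact ((insLe_lr hc' hs' _ _).trans (Sum.Lex.inl_le_inl_iff (a := x.1) (b := s))).trans
        ((insLe_lr hc hs x y).symm.trans (Sum.Lex.inl_le_inl_iff (α := (LPoset.insL c w).carrier)
          (a := Sum.inl x) (b := Sum.inr y)).symm)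
    · exact ⟨fun _ => Sum.Lex.inl_le_inr _ _, fun _ => Sum.Lex.inl_le_inr _ _⟩
    · exact ((insLe_rl hc' hs' ⟨toLex (Sum.inl y.1), y.2⟩ x).trans
        (Sum.Lex.inl_le_inl_iff (a := s) (b := y.1))).trans
        ((insLe_rl hc hs y x).symm.trans (Sum.Lex.inl_le_inl_iff (α := (LPoset.insL c w).carrier)
          (a := Sum.inr x) (b := Sum.inl y)).symm)
    · exact (Sum.Lex.inl_le_inl_iff (α := (LPoset.insL c w).carrier)
          (a := Sum.inr x) (b := Sum.inr y)).symm
    · exact (insLe_rl hc' hs' _ _).trans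
        ⟨fun _ => Sum.Lex.inl_le_inr _ _, fun _ => Sum.Lex.inl_le_inr _ _⟩
    · exact ⟨fun h => absurd h Sum.Lex.not_inr_le_inl, fun h => absurd h Sum.Lex.not_inr_le_inl⟩
    · refine (insLe_lr hc' hs' _ _).trans ?_
      exact ⟨fun h => absurd h Sum.Lex.not_inr_le_inl, fun h => absurd h Sum.Lex.not_inr_le_inl⟩
    · exact (Sum.Lex.inr_le_inr_iff (a := x) (b := y)).trans
        (Sum.Lex.inr_le_inr_iff (a := x) (b := y)).symm
  · rintro ((x | x) | x) <;> rfl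

theorem ins_parL {A : Type} (u : LPoset A) {c : LPoset (Option A)} (hc : c.uniqueStarL)
    (w : LPoset A) : pm (LPoset.insL (LPoset.parL (LPoset.mapL some u) c) w) =
      pm (LPoset.parL u (LPoset.insL c w)) := by
  symm
  have hc' := ctx_parL u hc
  obtain ⟨s, hs, hu⟩ := id hc
  let c' := LPoset.parL (LPoset.mapL some u) c
  let s' : c'.carrier := Sum.inr s
  have hs' : c'.lab s' = none := hs
  let g : (LPoset.parL u (LPoset.insL c w)).carrier → (LPoset.insL c' w).carrier := fun p =>
    match p with
    | .inl a => .inl ⟨Sum.inl a, fun h => Option.some_ne_none _ h⟩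
    | .inr (.inl x) => .inl ⟨Sum.inr x.1, x.2⟩
    | .inr (.inr b) => .inr b
  refine pm_eq g ?_ ?_ ?_
  · rintro (⟨x | x, hx⟩ | x)
    · exact ⟨Sum.inl x, rfl⟩
    · exact ⟨Sum.inr (Sum.inl ⟨x, hx⟩), rfl⟩
    · exact ⟨Sum.inr (Sum.inr x), rfl⟩
  · rintro (x | x | x) (y | y | y)
    · exact (Sum.inl_le_inl_iff (a := x) (b := y)).trans
        (Sum.inl_le_inl_iff (a := x) (b := y)).symm
    · exact ⟨fun h => absurd h Sum.not_inl_le_inr, fun h => absurd h Sum.not_inl_le_inr⟩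
    · exact (insLe_lr hc' hs' _ _).trans
        ⟨fun h => absurd h Sum.not_inl_le_inr, fun h => absurd h Sum.not_inl_le_inr⟩
    · exact ⟨fun h => absurd h Sum.not_inr_le_inl, fun h => absurd h Sum.not_inr_le_inl⟩
    · exact (Sum.inr_le_inr_iff (a := x.1) (b := y.1)).trans
        (Sum.inr_le_inr_iff (β := (LPoset.insL c w).carrier)
          (a := Sum.inl x) (b := Sum.inl y)).symm
    · exact ((insLe_lr hc' hs' _ _).trans (Sum.inr_le_inr_iff (a := x.1) (b := s))).trans
        ((insLe_lr hc hs x y).symm.trans (Sum.inr_le_inr_iff (β := (LPoset.insL c w).carrier)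
          (a := Sum.inl x) (b := Sum.inr y)).symm)
    · refine (insLe_rl hc' hs' _ _).trans ?_
      exact ⟨fun h => absurd h Sum.not_inr_le_inl, fun h => absurd h Sum.not_inr_le_inl⟩
    · exact ((insLe_rl hc' hs' _ _).trans (Sum.inr_le_inr_iff (a := s) (b := y.1))).trans
        ((insLe_rl hc hs y x).symm.trans (Sum.inr_le_inr_iff (β := (LPoset.insL c w).carrier)
          (a := Sum.inr x) (b := Sum.inl y)).symm)
    · exact (Sum.inr_le_inr_iff (β := (LPoset.insL c w).carrier)
          (a := Sum.inr x) (b := Sum.inr y)).symm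
  · rintro (x | x | x) <;> rfl

theorem map_some_sp {A : Type} {U : Pomset A} (h : U.IsSP) : (Pomset.map some U).IsSP := by
  induction U using Quotient.inductionOn with | _ u =>
  exact isSP_of_SPon (LPoset.mapL some u) (SPon_of_isSP u h)

/-- Functions on pomsets induced by series-parallel contexts. -/
inductive Frame {A : Type} : (Pomset A → Pomset A) → Prop
  | id : Frame fun W => W
  | seqL {U F} : U.IsSP → Frame F → Frame fun W => Pomset.seq U (F W)
  | seqR {U F} : U.IsSP → Frame F → Frame fun W => Pomset.seq (F W) U
  | parL {U F} : U.IsSP → Frame F → Frame fun W => Pomset.par U (F W)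

theorem Frame.comp {A : Type} {F G : Pomset A → Pomset A} (hF : Frame F) (hG : Frame G) :
    Frame fun W => F (G W) := by
  induction hF with
  | id => exact hG
  | seqL hU _ ih => exact .seqL hU ih
  | seqR hU _ ih => exact .seqR hU ih
  | parL hU _ ih => exact .parL hU ih

theorem Frame.ctx {A : Type} {F : Pomset A → Pomset A} (hF : Frame F) :
    ∃ C : Pomset (Option A), C.IsSPCtx ∧ ∀ W, C.ins W = F W := by
  induction hF with
  | id =>
    refine ⟨Pomset.single none, ⟨?_, .single _⟩, ins_star⟩
    exact ⟨PUnit.unit, rfl, fun _ _ => rfl⟩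
  | @seqL U F hU _ ih =>
    obtain ⟨C, ⟨h1, h2⟩, h3⟩ := ih
    refine ⟨Pomset.seq (Pomset.map some U) C, ⟨?_, .seq (map_some_sp hU) h2⟩, fun W => ?_⟩
    · induction U, C using Quotient.inductionOn₂ with | _ u c => exact ctx_seqL u h1
    · beta_reduce
      rw [← h3]
      induction U, C using Quotient.inductionOn₂ with | _ u c =>
      induction W using Quotient.inductionOn with | _ w =>
      exact ins_seqL u h1 w
  | @seqR U F hU _ ih =>
    obtain ⟨C, ⟨h1, h2⟩, h3⟩ := ih
    refine ⟨Pomset.seq C (Pomset.map some U), ⟨?_, .seq h2 (map_some_sp hU)⟩, fun W => ?_⟩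
    · induction U, C using Quotient.inductionOn₂ with | _ u c => exact ctx_seqR u h1
    · beta_reduce
      rw [← h3]
      induction U, C using Quotient.inductionOn₂ with | _ u c =>
      induction W using Quotient.inductionOn with | _ w =>
      exact ins_seqR u h1 w
  | @parL U F hU _ ih =>
    obtain ⟨C, ⟨h1, h2⟩, h3⟩ := ih
    refine ⟨Pomset.par (Pomset.map some U) C, ⟨?_, .par (map_some_sp hU) h2⟩, fun W => ?_⟩
    · induction U, C using Quotient.inductionOn₂ with | _ u c => exact ctx_parL u h1
    · beta_reduce
      rw [← h3]
      induction U, C using Quotient.inductionOn₂ with | _ u c =>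
      induction W using Quotient.inductionOn with | _ w =>
      exact ins_parL u h1 w

theorem exists_term {A : Type} {U : Pomset A} (h : U.IsSP) : ∃ e : Term A, e.lang = {U} := by
  induction h with
  | empty => exact ⟨.one, rfl⟩
  | single a => exact ⟨.var a, rfl⟩
  | seq _ _ i1 i2 =>
    obtain ⟨e, he⟩ := i1
    obtain ⟨f, hf⟩ := i2
    refine ⟨.seq e f, ?_⟩
    ext W
    simp [Term.lang, Lang.seq, he, hf]
  | par _ _ i1 i2 =>
    obtain ⟨e, he⟩ := i1
    obtain ⟨f, hf⟩ := i2
    refine ⟨.par e f, ?_⟩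
    ext W
    simp [Term.lang, Lang.par, he, hf]

theorem lang_sp {A : Type} (e : Term A) : ∀ U ∈ e.lang, U.IsSP := by
  induction e with
  | zero => intro U h; exact h.elim
  | one => rintro U rfl; exact .empty
  | var a => rintro U rfl; exact .single a
  | add e f i1 i2 => rintro U (h | h); exacts [i1 U h, i2 U h]
  | seq e f i1 i2 => rintro _ ⟨U, hU, V, hV, rfl⟩; exact .seq (i1 U hU) (i2 V hV)
  | par e f i1 i2 => rintro _ ⟨U, hU, V, hV, rfl⟩; exact .par (i1 U hU) (i2 V hV)
  | star e ih =>
    intro U hU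
    obtain ⟨n, hn⟩ := Set.mem_iUnion.1 hU
    clear hU
    induction n generalizing U with
    | zero => cases hn; exact .empty
    | succ n ihn =>
      obtain ⟨V, hV, W, hW, rfl⟩ := hn
      exact .seq (ihn V hV) (ih W hW)

/-- The exchange closure is closed under `spSub`. -/
theorem closure_exch_down {A : Type} {L : Lang A} {U V : Pomset A} (h : spSub U V) :
    ∀ F : Pomset A → Pomset A, Frame F → closure (exch A) L (F V) →
      closure (exch A) L (F U) := by
  induction h with
  | refl => intro F _ h; exact h
  | trans _ _ i1 i2 => intro F hF h; exact i1 F hF (i2 F hF h)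
  | @seqCong U V U' V' h1 h2 i1 i2 =>
    intro F hF h
    have a := i1 _ (hF.comp (.seqR (spSub_sp h2).2 .id)) h
    exact i2 _ (hF.comp (.seqL (spSub_sp h1).1 .id)) a
  | @parCong U V U' V' h1 h2 i1 i2 =>
    intro F hF h
    rw [par_comm] at h
    have a := i1 _ (hF.comp (.parL (spSub_sp h2).2 .id)) h
    change closure _ _ (F (Pomset.par V' U)) at a
    rw [par_comm] at a
    exact i2 _ (hF.comp (.parL (spSub_sp h1).1 .id)) a
  | @exch U V W X hU hV hW hX =>
    intro F hF h
    obtain ⟨e, he⟩ := exists_term hU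
    obtain ⟨f, hf⟩ := exists_term hV
    obtain ⟨g, hg⟩ := exists_term hW
    obtain ⟨k, hk⟩ := exists_term hX
    obtain ⟨C, hC, hCF⟩ := hF.ctx
    rw [← hCF] at h ⊢
    have hm : (Term.seq (.par e f) (.par g k), Term.par (.seq e g) (.seq f k)) ∈ CKAH.exch A :=
      ⟨e, f, g, k, rfl⟩
    refine closure.step hm hC ?_ ?_
    · intro Z hZ
      have : Z = Pomset.par (Pomset.seq U W) (Pomset.seq V X) := by
        simpa [Term.lang, Lang.par, Lang.seq, he, hf, hg, hk] using hZ
      rw [this]; exact h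
    · simp [Term.lang, Lang.par, Lang.seq, he, hf, hg, hk]

end CKAH

namespace CKAH
open Classical

theorem ins_sp {A : Type} {C : Pomset (Option A)} (hC : C.IsSPCtx) {W : Pomset A}
    (hW : W.IsSP) : (C.ins W).IsSP := by
  induction C, W using Quotient.inductionOn₂ with | _ c w =>
  obtain ⟨hc, hsp⟩ := hC
  change c.uniqueStarL at hc
  have hc0 := SPon_of_isSP c hsp
  have hw := SPon_of_isSP w hW
  obtain ⟨s, hs, hu⟩ := id hc
  let fill : Set c.carrier → Set (LPoset.insL c w).carrier := fun S =>
    {p | Sum.elim (fun x : {x : c.carrier // c.lab x ≠ none} => x.1 ∈ S) (fun _ => s ∈ S) p}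
  have fill_union : ∀ S T, fill (S ∪ T) = fill S ∪ fill T := by
    intro S T
    ext p
    rcases p with p | p <;> exact Iff.rfl
  -- comparing the orders through the collapse map
  let col : (LPoset.insL c w).carrier → c.carrier := fun p =>
    Sum.elim (fun x : {x : c.carrier // c.lab x ≠ none} => x.1) (fun _ => s) p
  have hcol : ∀ S p, p ∈ fill S ↔ col p ∈ S := by
    rintro S (p | p) <;> exact Iff.rfl
  have hle : ∀ p q, col p ≠ col q → (p ≤ q ↔ col p ≤ col q) := by
    rintro (p | p) (q | q) hpq
    · exact Iff.rfl
    · exact insLe_lr hc hs p q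
    · exact insLe_rl hc hs q p
    · exact absurd rfl hpq
  have key : ∀ S, SPon (fun x y : c.carrier => x ≤ y) S →
      SPon (fun x y : (LPoset.insL c w).carrier => x ≤ y) (fill S) := by
    intro S hS
    induction hS with
    | empty =>
      have : fill ∅ = ∅ := by
        ext p; rw [hcol]; exact Iff.rfl
      rw [this]; exact .empty
    | single x hx =>
      by_cases hxs : x = s
      · have : fill {x} = Sum.inr '' (Set.univ : Set w.carrier) := by
          ext p
          rw [hcol]
          rcases p with p | p
          · refine ⟨fun h => ?_, fun ⟨_, _, h⟩ => by cases h⟩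
            have h1 : p.1 = s := (show p.1 = x from h).trans hxs
            exact absurd (h1 ▸ hs) p.2
          · exact ⟨fun _ => ⟨p, trivial, rfl⟩, fun _ => hxs.symm⟩
        rw [this]
        exact hw.image _ (fun x _ y _ => Iff.rfl)
      · have hxn : c.lab x ≠ none := fun h => hxs (hu x h)
        have : fill {x} = {Sum.inl ⟨x, hxn⟩} := by
          ext p
          rw [hcol]
          rcases p with p | p
          · refine ⟨fun h => congrArg Sum.inl (Subtype.ext h), fun h => ?_⟩
            exact congrArg Subtype.val (Sum.inl.inj h)
          · exact ⟨fun h => absurd (show s = x from h).symm hxs, fun h => by cases h⟩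
        rw [this]
        exact .single _ le_rfl
    | @seq S T h1 h2 hr i1 i2 =>
      rw [fill_union]
      refine .seq i1 i2 fun p hp q hq => ?_
      have h := hr _ ((hcol S p).1 hp) _ ((hcol T q).1 hq)
      have hne : col p ≠ col q := fun e => h.2 e.ge
      rw [hle p q hne, hle q p hne.symm]
      exact h
    | @par S T h1 h2 hr i1 i2 =>
      rw [fill_union]
      refine .par i1 i2 fun p hp q hq => ?_
      have h := hr _ ((hcol S p).1 hp) _ ((hcol T q).1 hq)
      have hne : col p ≠ col q := fun e => h.2 e.ge
      rw [hle p q hne, hle q p hne.symm]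
      exact h
  have h := key _ hc0
  have : fill Set.univ = Set.univ := by
    ext p; rw [hcol]; exact ⟨fun _ => trivial, fun _ => trivial⟩
  rw [this] at h
  exact isSP_of_SPon (LPoset.insL c w) h

/-- Replacing the order of a labelled poset. -/
def LPoset.reord {A : Type} (c : LPoset A) (o : PartialOrder c.carrier) : LPoset A where
  carrier := c.carrier
  fin := c.fin
  ord := o
  lab := c.lab

theorem reord_sub {A : Type} (c : LPoset (Option A)) (o : PartialOrder c.carrier)
    (ho : ∀ x y : c.carrier, c.ord.le x y → o.le x y) (w : LPoset A) :
    LPoset.subL (LPoset.insL (c.reord o) w) (LPoset.insL c w) := by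
  refine ⟨Equiv.refl _, fun _ => rfl, ?_⟩
  rintro (x | x) (y | y) h
  · exact ho _ _ h
  · obtain ⟨h1, s, h2, h3⟩ := h
    exact ⟨h1, s, h2, ho _ _ h3⟩
  · obtain ⟨h1, s, h2, h3⟩ := h
    exact ⟨h1, s, h2, ho _ _ h3⟩
  · exact h

theorem step_var {A : Type} {C : Pomset (Option A)} (hC : C.IsSPCtx) (a : A) {U : Pomset A}
    (hU : U.IsSP) (h : U.sub (C.ins (Pomset.single a))) :
    ∃ D : Pomset (Option A), D.IsSPCtx ∧ D.ins (Pomset.single a) = U ∧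
      ∀ W, (D.ins W).sub (C.ins W) := by
  induction C, U using Quotient.inductionOn₂ with | _ c u =>
  obtain ⟨hc, hsp⟩ := hC
  change c.uniqueStarL at hc
  obtain ⟨f, hl, hm⟩ := h
  obtain ⟨s, hs, hu⟩ := id hc
  let g : c.carrier → (LPoset.insL c (LPoset.singleL a)).carrier := fun x =>
    if hx : c.lab x = none then Sum.inr PUnit.unit else Sum.inl ⟨x, hx⟩
  let k : (LPoset.insL c (LPoset.singleL a)).carrier → c.carrier := fun p =>
    Sum.elim (fun x : {x : c.carrier // c.lab x ≠ none} => x.1) (fun _ => s) p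
  have gs : g s = Sum.inr PUnit.unit := dif_pos hs
  have gl : ∀ x : {x : c.carrier // c.lab x ≠ none}, g x.1 = Sum.inl x := fun x => dif_neg x.2
  have kg : ∀ x, k (g x) = x := by
    intro x
    by_cases hx : c.lab x = none
    · rw [hu x hx, gs]; rfl
    · rw [gl ⟨x, hx⟩]; rfl
  have gk : ∀ p, g (k p) = p := by
    rintro (p | p)
    · exact gl p
    · exact gs
  have kle : ∀ p q, p ≤ q ↔ k p ≤ k q := by
    rintro (p | p) (q | q)
    · exact Iff.rfl
    · exact insLe_lr hc hs p q
    · exact insLe_rl hc hs q p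
    · exact ⟨fun _ => le_rfl, fun _ => le_rfl⟩
  have ginj : Function.Injective (fun x => f (g x)) := fun x y hxy => by
    rw [← kg x, ← kg y, f.injective hxy]
  let o : PartialOrder c.carrier := PartialOrder.lift (fun x => f (g x)) ginj
  have ho : ∀ x y : c.carrier, c.ord.le x y → o.le x y := fun x y hxy =>
    hm _ _ ((kle _ _).2 (by rw [kg, kg]; exact hxy))
  have hc' : (c.reord o).uniqueStarL := hc
  refine ⟨pm (c.reord o), ⟨hc, ?_⟩, ?_, ?_⟩
  · apply isSP_of_SPon
    have hu' := SPon_of_isSP u hU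
    have := hu'.image (r' := o.le) (fun y => k (f.symm y)) (fun x _ y _ => by
      change f (g (k (f.symm x))) ≤ f (g (k (f.symm y))) ↔ _
      rw [gk, gk, f.apply_symm_apply, f.apply_symm_apply])
    have e : (fun y => k (f.symm y)) '' Set.univ = Set.univ := by
      rw [Set.image_univ, Set.range_eq_univ]
      intro x
      exact ⟨f (g x), by simp [kg]⟩
    rwa [e] at this
  · refine pm_eq (u := LPoset.insL (c.reord o) (LPoset.singleL a)) (v := u) (fun p => f p)
      f.surjective ?_ hl
    have E : ∀ p q, f p ≤ f q ↔ o.le (k p) (k q) := fun p q => by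
      change _ ↔ f (g (k p)) ≤ f (g (k q))
      rw [gk, gk]
    rintro (p | p) (q | q)
    · exact E (Sum.inl p) (Sum.inl q)
    · exact (E (Sum.inl p) (Sum.inr q)).trans (insLe_lr (c := c.reord o) hc' hs p q).symm
    · exact (E (Sum.inr p) (Sum.inl q)).trans (insLe_rl (c := c.reord o) hc' hs q p).symm
    · exact ⟨fun _ => le_rfl, fun _ => le_rfl⟩
  · intro W
    induction W using Quotient.inductionOn with | _ w =>
    exact reord_sub c o ho w

theorem step_one {A : Type} {C : Pomset (Option A)} (hC : C.IsSPCtx) {U : Pomset A}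
    (hU : U.IsSP) (h : U.sub (C.ins (Pomset.empty A))) :
    ∃ D : Pomset (Option A), D.IsSPCtx ∧ D.ins (Pomset.empty A) = U ∧
      ∀ W, (D.ins W).sub (C.ins W) := by
  induction C, U using Quotient.inductionOn₂ with | _ c u =>
  obtain ⟨hc, hsp⟩ := hC
  change c.uniqueStarL at hc
  obtain ⟨f, hl, hm⟩ := h
  obtain ⟨s, hs, hu⟩ := id hc
  let S : Set c.carrier := {x | c.lab x ≠ none}
  let o' : c.carrier → c.carrier → Prop := fun x y =>
    ∃ (hx : c.lab x ≠ none) (hy : c.lab y ≠ none), f (Sum.inl ⟨x, hx⟩) ≤ f (Sum.inl ⟨y, hy⟩)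
  let k : (LPoset.insL c (LPoset.emptyL A)).carrier → c.carrier := fun p =>
    Sum.elim (fun x : {x : c.carrier // c.lab x ≠ none} => x.1) (fun _ => s) p
  have hsS : s ∉ S := fun h => h hs
  have hSu : insert s S = Set.univ := by
    ext x
    refine ⟨fun _ => trivial, fun _ => ?_⟩
    by_cases hx : c.lab x = none
    · exact .inl (hu x hx)
    · exact .inr hx
  have hk : ∀ p q, o' (k p) (k q) ↔ f p ≤ f q := by
    rintro (p | p) (q | q)
    · exact ⟨fun ⟨_, _, h⟩ => h, fun h => ⟨p.2, q.2, h⟩⟩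
    · exact q.elim0
    · exact p.elim0
    · exact p.elim0
  have hS : SPon o' S := by
    have := (SPon_of_isSP u hU).image (r' := o') (fun y => k (f.symm y)) (fun x _ y _ => by
      rw [hk, f.apply_symm_apply, f.apply_symm_apply])
    have e : (fun y => k (f.symm y)) '' Set.univ = S := by
      ext x
      constructor
      · rintro ⟨y, _, rfl⟩
        change c.lab (k (f.symm y)) ≠ none
        rcases f.symm y with p | p
        · exact p.2
        · exact p.elim0
      · intro hx
        refine ⟨f (Sum.inl ⟨x, hx⟩), trivial, ?_⟩
        change k (f.symm (f (Sum.inl ⟨x, hx⟩))) = x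
        exact congrArg k (f.symm_apply_apply (Sum.inl ⟨x, hx⟩))
    rwa [e] at this
  obtain ⟨d', p1, p2, p3⟩ := insert_point (fun x y : c.carrier => x ≤ y) s (fun x => le_rfl)
    (fun x y z => le_trans) hS hsS (fun x hx y hy hxy => ⟨hx, hy, hm _ _ hxy⟩)
    (fun x hx h1 h2 => hsS (le_antisymm h1 h2 ▸ hx))
  rw [hSu] at p1 p3
  let o : PartialOrder c.carrier :=
    { le := d'
      lt := fun x y => d' x y ∧ ¬ d' y x
      lt_iff_le_not_ge := fun _ _ => Iff.rfl
      le_refl := fun x => p1.refl x trivial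
      le_trans := fun x y z => p1.trans x trivial y trivial z trivial
      le_antisymm := fun x y => p1.antisymm x trivial y trivial }
  refine ⟨pm (c.reord o), ⟨hc, ?_⟩, ?_, ?_⟩
  · exact isSP_of_SPon (c.reord o) p1
  · refine pm_eq (u := LPoset.insL (c.reord o) (LPoset.emptyL A)) (v := u) (fun p => f p)
      f.surjective ?_ hl
    rintro (p | p) (q | q)
    · exact (hk (Sum.inl p) (Sum.inl q)).symm.trans (p2 p.1 p.2 q.1 q.2).symm
    · exact q.elim0
    · exact p.elim0
    · exact p.elim0
  · intro W
    induction W using Quotient.inductionOn with | _ w =>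
    exact reord_sub c o (fun x y h => p3 x trivial y trivial h) w

theorem exch_sub {A : Type} (U V W X : Pomset A) (C : Pomset (Option A)) :
    (C.ins (Pomset.seq (Pomset.par U V) (Pomset.par W X))).sub
      (C.ins (Pomset.par (Pomset.seq U W) (Pomset.seq V X))) := by
  have h : (Pomset.seq (Pomset.par U V) (Pomset.par W X)).sub
      (Pomset.par (Pomset.seq U W) (Pomset.seq V X)) := by
    induction U, V using Quotient.inductionOn₂ with | _ u v =>
    induction W, X using Quotient.inductionOn₂ with | _ w x =>
    let e : ((u.carrier ⊕ w.carrier) ⊕ (v.carrier ⊕ x.carrier)) ≃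
      ((u.carrier ⊕ v.carrier) ⊕ (w.carrier ⊕ x.carrier)) := Equiv.sumSumSumComm _ _ _ _
    refine ⟨e, ?_, ?_⟩
    · rintro ((p | p) | (p | p)) <;> rfl
    · rintro ((p | p) | (p | p)) ((q | q) | (q | q)) h
      · have h := Sum.Lex.inl_le_inl_iff.1 (Sum.inl_le_inl_iff.1 h)
        exact Sum.Lex.inl_le_inl_iff.2 (Sum.inl_le_inl_iff.2 h)
      · exact Sum.Lex.inl_le_inr _ _
      · exact absurd h Sum.not_inl_le_inr
      · exact absurd h Sum.not_inl_le_inr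
      · exact absurd (Sum.inl_le_inl_iff.1 h) Sum.Lex.not_inr_le_inl
      · have h := Sum.Lex.inr_le_inr_iff.1 (Sum.inl_le_inl_iff.1 h)
        exact Sum.Lex.inr_le_inr_iff.2 (Sum.inl_le_inl_iff.2 h)
      · exact absurd h Sum.not_inl_le_inr
      · exact absurd h Sum.not_inl_le_inr
      · exact absurd h Sum.not_inr_le_inl
      · exact absurd h Sum.not_inr_le_inl
      · have h := Sum.Lex.inl_le_inl_iff.1 (Sum.inr_le_inr_iff.1 h)
        exact Sum.Lex.inl_le_inl_iff.2 (Sum.inr_le_inr_iff.2 h)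
      · exact Sum.Lex.inl_le_inr _ _
      · exact absurd h Sum.not_inr_le_inl
      · exact absurd h Sum.not_inr_le_inl
      · exact absurd (Sum.inr_le_inr_iff.1 h) Sum.Lex.not_inr_le_inl
      · have h := Sum.Lex.inr_le_inr_iff.1 (Sum.inr_le_inr_iff.1 h)
        exact Sum.Lex.inr_le_inr_iff.2 (Sum.inr_le_inr_iff.2 h)
  generalize Pomset.seq (Pomset.par U V) (Pomset.par W X) = P at h
  generalize Pomset.par (Pomset.seq U W) (Pomset.seq V X) = Q at h
  induction P, Q using Quotient.inductionOn₂ with | _ p q =>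
  induction C using Quotient.inductionOn with | _ c =>
  obtain ⟨f, hl, hm⟩ := h
  refine ⟨Equiv.sumCongr (Equiv.refl _) f, ?_, ?_⟩
  · rintro (x | x)
    · rfl
    · exact hl x
  · rintro (x | x) (y | y) h
    · exact h
    · exact h
    · exact h
    · exact hm x y h

theorem closure_exch_sp {A : Type} {L : Lang A} (hL : L ⊆ SPset A) {V : Pomset A}
    (h : closure (exch A) L V) : V.IsSP := by
  induction h with
  | base h => exact hL h
  | step hef hC hf hU ih => exact ins_sp hC (lang_sp _ _ hU)

theorem closure_down {A : Type} {H : HypSet A}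
    (hH : ∀ p ∈ H, p.1 = Term.one ∨ ∃ a : A, p.1 = Term.var a)
    {L : Lang A} (hL : L ⊆ SPset A) {V : Pomset A} (h : closure H (cl (exch A) L) V) :
    ∀ U : Pomset A, U.IsSP → U.sub V → closure H (cl (exch A) L) U := by
  induction h with
  | base h =>
    intro U hU hUV
    exact .base (closure_exch_down (gischer hU (closure_exch_sp hL h) hUV) _ .id h)
  | @step e f hef C hC hf V hV ih =>
    intro U hU hUV
    have key : ∃ D : Pomset (Option A), D.IsSPCtx ∧ D.ins V = U ∧
        ∀ W, (D.ins W).sub (C.ins W) := by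
      rcases hH _ hef with h1 | ⟨a, h1⟩
      · simp only at h1
        subst h1
        cases hV
        exact step_one hC hU hUV
      · simp only at h1
        subst h1
        cases hV
        exact step_var hC a hU hUV
    obtain ⟨D, hD, rfl, hsub⟩ := key
    exact .step hef hD (fun W hW => ih W hW _ (ins_sp hD (lang_sp _ _ hW)) (hsub W)) hV

theorem closure_mono_idem {A : Type} {H₀ H : HypSet A} (hs : H₀ ⊆ H) {L K : Lang A}
    (hK : ∀ U ∈ K, closure H L U) {U : Pomset A} (h : closure H₀ K U) : closure H L U := by
  induction h with
  | base h => exact hK _ h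
  | step hef hC hf hU ih => exact .step (hs hef) hC ih hU

end CKAH

namespace CKAH

/-- **Factoring the exchange law**: if every hypothesis of `H` has left-hand side `1` or
a letter, then `H ∪ exch` factorises into `exch` and `H`. -/
theorem factorise_exch (A : Type) (H : HypSet A)
    (hH : ∀ p ∈ H, p.1 = Term.one ∨ ∃ a : A, p.1 = Term.var a) :
    Factorises (H ∪ exch A) (exch A) H := by
  refine ⟨fun p hp => CongH.hyp (Or.inr hp), fun p hp => CongH.hyp (Or.inl hp), ?_⟩
  intro L hL
  apply Set.Subset.antisymm
  · intro U hU
    change closure H (cl (exch A) L) U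
    change closure (H ∪ exch A) L U at hU
    induction hU with
    | base h => exact .base (closure.base h)
    | @step e f hef C hC hf V hV ih =>
      rcases hef with hef | ⟨e, f', g, k, hp⟩
      · exact .step hef hC ih hV
      · obtain ⟨rfl, rfl⟩ := Prod.mk.inj hp
        have hsp := ins_sp hC (lang_sp _ _ hV)
        obtain ⟨_, ⟨U1, h1, U2, h2, rfl⟩, _, ⟨U3, h3, U4, h4, rfl⟩, rfl⟩ := hV
        exact closure_down hH hL
          (ih _ ⟨_, ⟨U1, h1, U3, h3, rfl⟩, _, ⟨U2, h2, U4, h4, rfl⟩, rfl⟩) _ hsp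
          (exch_sub U1 U2 U3 U4 C)
  · intro U hU
    exact closure_mono_idem Set.subset_union_left
      (fun V hV => closure_mono_idem Set.subset_union_right (fun W hW => .base hW) hV) hU

end CKAH
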